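/- arXiv:1202.0874 — 3 statements merged into one kernel-verified Lean document; each statement's English description precedes it below -/
import Mathlib

section
/- Σ over integers l, m, n ≥ 1 with l + 2m + 3n ≡ 2 (mod 4) of 1 / (l² m² n² (l+m)² (m+n)² (l+m+n)²) = 1103·π¹² / 145332633600. -/
open Real

/-!
Read as a sum over increasing sequences `0 < n < m + n < l + m + n`, the summand is the inverse
square of a Vandermonde determinant, so it is invariant under permutations and translations. The sum
is therefore `1 / 4!` of the sum over all integer triples which together with `0` have distinct
entries, and the congruence modulo `4` is detected by the characters `e(nθ)` with `4θ = 0`.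

The innermost sum of the twisted series is evaluated by partial fractions. Its three double poles
are exchanged by cyclic permutations, which preserve the twist because `4θ = 0`, so a single pole
accounts for a third of the total. It leaves double series that partial fractions reduce in turn to
products of bilateral zeta values, that is, of values of Bernoulli polynomials at `θ` and `2θ`.
-/

section BilateralZeta

/-- The regularised value of the bilateral series `∑_{n ≠ 0} e(nθ) / n ^ k` on the circle, in closed
form. For `k = 1` it is the conditionally convergent value unless `θ = 0`, and for `k = 0` it is
`-1`, as if `∑_n e(nθ)` vanished. -/
noncomputable def bilateralZeta (θ : UnitAddCircle) (k : ℕ) : ℂ :=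
  -(2 * π * Complex.I) ^ k / k.factorial * periodizedBernoulli k θ

theorem bilateralZeta_coe {x : ℝ} (hx : x ∈ Set.Ico (0 : ℝ) 1) (k : ℕ) :
    bilateralZeta (x : UnitAddCircle) k =
      -(2 * π * Complex.I) ^ k / k.factorial * bernoulliFun k x := by
  rw [bilateralZeta, periodizedBernoulli, AddCircle.liftIco_zero_coe_apply hx]

theorem exists_mem_Ico_coe_eq (θ : UnitAddCircle) :
    ∃ x ∈ Set.Ico (0 : ℝ) 1, (x : UnitAddCircle) = θ := by
  simpa using (AddCircle.coe_image_Ico_eq (1 : ℝ) 0).ge (Set.mem_univ θ)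

theorem bilateralZeta_zero (θ : UnitAddCircle) : bilateralZeta θ 0 = -1 := by
  obtain ⟨x, hx, rfl⟩ := exists_mem_Ico_coe_eq θ
  simp [bilateralZeta_coe hx]

theorem hasSum_fourier_mul_inv_pow (θ : UnitAddCircle) {k : ℕ} (hk : 2 ≤ k) :
    HasSum (fun n : ℤ => fourier n θ * (n : ℂ)⁻¹ ^ k) (bilateralZeta θ k) := by
  obtain ⟨x, hx, rfl⟩ := exists_mem_Ico_coe_eq θ
  rw [bilateralZeta_coe hx]
  simpa only [one_div, inv_pow, mul_comm] using
    hasSum_one_div_pow_mul_fourier_mul_bernoulliFun hk (Set.Ico_subset_Icc_self hx)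

theorem continuous_fourier_sub_one_mul_periodizedBernoulli_one (m : ℤ) :
    Continuous fun θ : UnitAddCircle => (fourier m θ - 1) * (periodizedBernoulli 1 θ : ℂ) := by
  have h : (fun θ : UnitAddCircle => (fourier m θ - 1) * (periodizedBernoulli 1 θ : ℂ)) =
      AddCircle.liftIco 1 0 fun x : ℝ =>
        (fourier m (x : UnitAddCircle) - 1) * (bernoulliFun 1 x : ℂ) := by
    funext θ
    obtain ⟨x, hx, rfl⟩ := exists_mem_Ico_coe_eq θ
    rw [periodizedBernoulli, AddCircle.liftIco_zero_coe_apply hx,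
      AddCircle.liftIco_zero_coe_apply hx]
  rw [h]
  refine AddCircle.liftIco_zero_continuous ?_ (Continuous.continuousOn ?_)
  · simp only [AddCircle.coe_period, QuotientAddGroup.mk_zero, fourier_eval_zero, sub_self,
      zero_mul]
  · exact (((fourier m).continuous.comp (AddCircle.continuous_mk' 1)).sub continuous_const).mul
      (Complex.continuous_ofReal.comp (continuous_bernoulliFun 1))

theorem norm_fourier_apply (n : ℤ) (θ : UnitAddCircle) : ‖fourier n θ‖ = 1 := by
  rw [fourier_apply, Circle.norm_coe]

theorem integral_fourier_neg_mul_periodizedBernoulli_one (n : ℤ) :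
    ∫ θ : UnitAddCircle, fourier (-n) θ * (periodizedBernoulli 1 θ : ℂ) ∂AddCircle.haarAddCircle =
      -(2 * π * Complex.I)⁻¹ * (n : ℂ)⁻¹ := by
  have h := fourierCoeff_bernoulli_eq one_ne_zero n
  rw [Nat.factorial_one, pow_one, Nat.cast_one] at h
  rw [neg_mul, ← mul_inv, ← one_div, ← neg_div]
  exact h

theorem integrable_fourier_mul_periodizedBernoulli_one (n : ℤ) :
    MeasureTheory.Integrable (fun θ : UnitAddCircle => fourier n θ * (periodizedBernoulli 1 θ : ℂ))
      AddCircle.haarAddCircle := by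
  -- A non-integrable function would have integral zero, but the first Fourier coefficient is not.
  have hneg_one : MeasureTheory.Integrable
      (fun θ : UnitAddCircle => fourier (-1) θ * (periodizedBernoulli 1 θ : ℂ))
      AddCircle.haarAddCircle := by
    by_contra h
    have h1 := integral_fourier_neg_mul_periodizedBernoulli_one 1
    rw [MeasureTheory.integral_undef h] at h1
    simp [Real.pi_ne_zero] at h1
  refine (hneg_one.bdd_mul (c := 1) (fourier (n + 1)).continuous.aestronglyMeasurable
    (.of_forall fun θ => (norm_fourier_apply _ _).le)).congr (.of_forall fun θ => ?_)
  dsimp only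
  rw [← mul_assoc, ← fourier_add, add_neg_cancel_right]

theorem fourierCoeff_fourier_sub_one_mul_periodizedBernoulli_one (m n : ℤ) :
    fourierCoeff (fun θ : UnitAddCircle => (fourier m θ - 1) * (periodizedBernoulli 1 θ : ℂ)) n =
      -(2 * π * Complex.I)⁻¹ * (((n : ℂ) - m)⁻¹ - (n : ℂ)⁻¹) := by
  have hsplit : ∀ θ : UnitAddCircle,
      fourier (-n) θ • ((fourier m θ - 1) * (periodizedBernoulli 1 θ : ℂ)) =
        fourier (-(n - m)) θ * (periodizedBernoulli 1 θ : ℂ) -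
          fourier (-n) θ * (periodizedBernoulli 1 θ : ℂ) := fun θ => by
    rw [neg_sub, sub_eq_neg_add m n, fourier_add, smul_eq_mul]
    ring
  simp only [fourierCoeff, hsplit]
  rw [MeasureTheory.integral_sub (integrable_fourier_mul_periodizedBernoulli_one _)
      (integrable_fourier_mul_periodizedBernoulli_one _),
    integral_fourier_neg_mul_periodizedBernoulli_one,
    integral_fourier_neg_mul_periodizedBernoulli_one, Int.cast_sub, mul_sub]

theorem summable_norm_inv_int_sub_pow (m : ℤ) {k : ℕ} (hk : 2 ≤ k) :
    Summable fun n : ℤ => ‖((n : ℂ) - m)⁻¹ ^ k‖ := by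
  simpa [Function.comp_def, ← Int.cast_sub] using
    (Equiv.subRight m).summable_iff.mpr (Real.summable_one_div_int_pow.mpr hk).norm

theorem summable_inv_int_sub_sub_inv_int (m : ℤ) :
    Summable fun n : ℤ => ((n : ℂ) - m)⁻¹ - (n : ℂ)⁻¹ := by
  have hbound : Summable fun n : ℤ =>
      ‖(m : ℂ)‖ * (‖((n : ℂ) - m)⁻¹ ^ 2‖ + ‖((n : ℂ) - (0 : ℤ))⁻¹ ^ 2‖) :=
    ((summable_norm_inv_int_sub_pow m le_rfl).add
      (summable_norm_inv_int_sub_pow 0 le_rfl)).mul_left _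
  refine hbound.of_norm_bounded_eventually ?_
  filter_upwards [Filter.eventually_cofinite_ne 0, Filter.eventually_cofinite_ne m] with n hn hnm
  have hn' : (n : ℂ) ≠ 0 := mod_cast hn
  have hnm' : (n : ℂ) - m ≠ 0 := sub_ne_zero.mpr (mod_cast hnm)
  have h : ((n : ℂ) - m)⁻¹ - (n : ℂ)⁻¹ = m * (((n : ℂ) - m)⁻¹ * (n : ℂ)⁻¹) := by
    field_simp
    ring
  rw [h, Int.cast_zero, sub_zero, norm_mul, norm_mul, norm_pow, norm_pow]
  gcongr
  nlinarith [two_mul_le_add_sq ‖((n : ℂ) - m)⁻¹‖ ‖(n : ℂ)⁻¹‖, norm_nonneg ((n : ℂ) - m)⁻¹,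
    norm_nonneg (n : ℂ)⁻¹, mul_nonneg (norm_nonneg ((n : ℂ) - m)⁻¹) (norm_nonneg (n : ℂ)⁻¹)]

theorem hasSum_fourier_mul_inv_sub_sub_inv (θ : UnitAddCircle) (m : ℤ) :
    HasSum (fun n : ℤ => fourier n θ * (((n : ℂ) - m)⁻¹ - (n : ℂ)⁻¹))
      ((fourier m θ - 1) * bilateralZeta θ 1) := by
  let f : C(UnitAddCircle, ℂ) :=
    ⟨_, continuous_fourier_sub_one_mul_periodizedBernoulli_one m⟩
  have hcoeff : fourierCoeff f = fun n : ℤ =>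
      -(2 * π * Complex.I)⁻¹ * (((n : ℂ) - m)⁻¹ - (n : ℂ)⁻¹) :=
    funext (fourierCoeff_fourier_sub_one_mul_periodizedBernoulli_one m)
  have hsummable : Summable (fourierCoeff f) := by
    rw [hcoeff]
    exact (summable_inv_int_sub_sub_inv_int m).mul_left _
  have h := (has_pointwise_sum_fourier_series_of_summable hsummable θ).mul_left
    (-(2 * π * Complex.I))
  convert! h using 1
  · funext n
    rw [hcoeff, smul_eq_mul]
    field_simp
  · simp [f, bilateralZeta]
    ring

end BilateralZeta

section PartialFractions

variable (θ : UnitAddCircle)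

theorem hasSum_fourier_mul_piSingle (p : ℤ) (c : ℂ) :
    HasSum (fun n : ℤ => fourier n θ * (Pi.single p c : ℤ → ℂ) n) (fourier p θ * c) := by
  simpa using hasSum_single p fun n (hn : n ≠ p) =>
    show fourier n θ * (Pi.single p c : ℤ → ℂ) n = 0 by rw [Pi.single_eq_of_ne hn, mul_zero]

theorem hasSum_fourier_mul_inv_sub_pow (p : ℤ) (j : ℕ) :
    HasSum (fun n : ℤ => fourier n θ * (((n : ℂ) - p)⁻¹ ^ (j + 1) - if j = 0 then (n : ℂ)⁻¹ else 0))
      (fourier p θ * bilateralZeta θ (j + 1) - if j = 0 then bilateralZeta θ 1 else 0) := by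
  rcases eq_or_ne j 0 with rfl | hj
  · simpa [sub_one_mul] using hasSum_fourier_mul_inv_sub_sub_inv θ p
  · have h := (Equiv.subRight p).hasSum_iff.mpr
      (hasSum_fourier_mul_inv_pow θ (k := j + 1) (by lia))
    convert! h.mul_left (fourier p θ) using 1
    · funext n
      simp only [if_neg hj, sub_zero, Function.comp_apply, Equiv.subRight_apply, Int.cast_sub,
        ← mul_assoc, ← fourier_add, add_sub_cancel]
    · rw [if_neg hj, sub_zero]

/- The constant terms `a i 0` are the values at the poles that the convention `0⁻¹ = 0` gets wrong;
they fit into the formula because `bilateralZeta θ 0 = -1`. -/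
theorem hasSum_fourier_mul_of_partialFraction {ι : Type*} [Fintype ι] {p : ι → ℤ} {m : ι → ℕ}
    (hm : ∀ i, m i ≠ 0) {a : ι → ℕ → ℂ} (hres : ∑ i, a i 1 = 0) {g : ℤ → ℂ}
    (hg : ∀ n : ℤ, g n + ∑ i, (Pi.single (p i) (a i 0) : ℤ → ℂ) n =
      ∑ i, ∑ j ∈ Finset.range (m i), a i (j + 1) * ((n : ℂ) - p i)⁻¹ ^ (j + 1)) :
    HasSum (fun n : ℤ => fourier n θ * g n)
      (∑ i, fourier (p i) θ * ∑ j ∈ Finset.range (m i + 1), a i j * bilateralZeta θ j) := by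
  have hdrop : ∀ (z : ℂ) (u : ι → ℕ → ℂ),
      ∑ i, ∑ j ∈ Finset.range (m i), a i (j + 1) * (u i j - if j = 0 then z else 0) =
        ∑ i, ∑ j ∈ Finset.range (m i), a i (j + 1) * u i j := fun z u => by
    have hz : ∀ i, ∑ j ∈ Finset.range (m i), a i (j + 1) * (if j = 0 then z else 0) = a i 1 * z :=
      fun i => by simp [Finset.sum_ite_eq', Nat.pos_of_ne_zero (hm i), mul_ite]
    simp_rw [mul_sub, Finset.sum_sub_distrib, hz, ← Finset.sum_mul, hres, zero_mul, sub_zero]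
  have h := hasSum_sum (s := Finset.univ) fun i _ =>
    (hasSum_sum (s := Finset.range (m i)) fun j _ =>
      (hasSum_fourier_mul_inv_sub_pow θ (p i) j).mul_left (a i (j + 1))).sub
    (hasSum_fourier_mul_piSingle θ (p i) (a i 0))
  rw [Finset.sum_sub_distrib, hdrop] at h
  convert! h using 1
  · funext n
    rw [Finset.sum_sub_distrib]
    simp_rw [mul_left_comm (a _ _), ← Finset.mul_sum]
    rw [hdrop, ← mul_sub, ← hg, add_sub_cancel_right]
  · rw [← Finset.sum_sub_distrib]
    refine Finset.sum_congr rfl fun i _ => ?_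
    rw [Finset.sum_range_succ', bilateralZeta_zero, mul_add, Finset.mul_sum]
    simp_rw [mul_left_comm (a _ _)]
    ring

end PartialFractions

section TwoPoles

variable (θ : UnitAddCircle)

theorem inv_mul_inv_sub {n x : ℂ} (hn : n ≠ 0) (hx : x ≠ 0) (hnx : n ≠ x) :
    n⁻¹ * (n - x)⁻¹ = x⁻¹ * ((n - x)⁻¹ - n⁻¹) := by
  have := sub_ne_zero.mpr hnx
  field_simp
  ring

theorem inv_pow_mul_inv_sub_sq {n x : ℂ} (hn : n ≠ 0) (hx : x ≠ 0) (hnx : n ≠ x) (q : ℕ) :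
    n⁻¹ ^ q * (n - x)⁻¹ ^ 2 =
      ∑ j ∈ Finset.range q, (q - j) * x⁻¹ ^ (q + 1 - j) * n⁻¹ ^ (j + 1) -
        q * x⁻¹ ^ (q + 1) * (n - x)⁻¹ + x⁻¹ ^ q * (n - x)⁻¹ ^ 2 := by
  induction q with
  | zero => simp
  | succ q ih =>
    have hshift : ∑ j ∈ Finset.range (q + 1),
        ((q + 1 : ℕ) - j) * x⁻¹ ^ (q + 1 + 1 - j) * n⁻¹ ^ (j + 1) =
        n⁻¹ * ∑ j ∈ Finset.range q, (q - j) * x⁻¹ ^ (q + 1 - j) * n⁻¹ ^ (j + 1) +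
          (q + 1) * x⁻¹ ^ (q + 2) * n⁻¹ := by
      rw [Finset.sum_range_succ', Finset.mul_sum]
      congr 1
      · refine Finset.sum_congr rfl fun j _ => ?_
        rw [Nat.add_sub_add_right]
        push_cast
        ring
      · simp
    rw [hshift]
    have h := inv_mul_inv_sub hn hx hnx
    push_cast
    linear_combination n⁻¹ * ih +
      (x⁻¹ ^ q * (n - x)⁻¹ - (q + 1) * x⁻¹ ^ (q + 1)) * h

theorem sum_range_cast_sub_cast (q : ℕ) :
    ∑ j ∈ Finset.range q, ((q : ℂ) - j) = (q + 1).choose 2 := by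
  induction q with
  | zero => simp
  | succ q ih =>
    have hchoose : (q + 1 + 1).choose 2 = (q + 1) + (q + 1).choose 2 := by
      rw [Nat.choose_succ_succ', Nat.choose_one_right]
    rw [hchoose, Nat.cast_add (q + 1), ← ih, Finset.sum_range_succ']
    simp [add_comm]

theorem inv_pow_mul_inv_sub_sq_add_piSingle (n : ℤ) {x : ℤ} (hx : x ≠ 0) {q : ℕ} (hq : q ≠ 0) :
    (n : ℂ)⁻¹ ^ q * ((n : ℂ) - x)⁻¹ ^ 2 +
        ((Pi.single 0 ((q + 1) * (x : ℂ)⁻¹ ^ (q + 2)) : ℤ → ℂ) n +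
          (Pi.single x ((q + 1).choose 2 * (x : ℂ)⁻¹ ^ (q + 2)) : ℤ → ℂ) n) =
      ∑ j ∈ Finset.range q, (q - j) * (x : ℂ)⁻¹ ^ (q + 1 - j) * (n : ℂ)⁻¹ ^ (j + 1) +
        (-(q * (x : ℂ)⁻¹ ^ (q + 1) * ((n : ℂ) - x)⁻¹) +
          (x : ℂ)⁻¹ ^ q * ((n : ℂ) - x)⁻¹ ^ 2) := by
  rcases eq_or_ne n 0 with rfl | hn
  · simp only [Int.cast_zero, inv_zero, zero_pow hq, zero_mul, Pi.single_eq_same,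
      Pi.single_eq_of_ne hx.symm, zero_sub, inv_neg, zero_pow (Nat.succ_ne_zero _), mul_zero,
      Finset.sum_const_zero]
    ring
  rcases eq_or_ne n x with rfl | hnx
  · have h : ∀ j ∈ Finset.range q, ((q : ℂ) - j) * (n : ℂ)⁻¹ ^ (q + 1 - j) * (n : ℂ)⁻¹ ^ (j + 1) =
        (q - j) * (n : ℂ)⁻¹ ^ (q + 2) := fun j hj => by
      rw [mul_assoc, ← pow_add]
      congr 2
      have := Finset.mem_range.mp hj
      lia
    rw [Finset.sum_congr rfl h, ← Finset.sum_mul, sum_range_cast_sub_cast]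
    simp [hx]
  · rw [inv_pow_mul_inv_sub_sq (mod_cast hn) (mod_cast hx) (mod_cast hnx), Pi.single_eq_of_ne hn,
      Pi.single_eq_of_ne hnx]
    ring

theorem hasSum_fourier_mul_inv_pow_mul_inv_sub_sq {q : ℕ} (hq : q ≠ 0) {x : ℤ} (hx : x ≠ 0) :
    HasSum (fun n : ℤ => fourier n θ * ((n : ℂ)⁻¹ ^ q * ((n : ℂ) - x)⁻¹ ^ 2))
      (∑ j ∈ Finset.range (q + 1),
          (q + 1 - j) * (x : ℂ)⁻¹ ^ (q + 2 - j) * bilateralZeta θ j +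
        fourier x θ * ((q + 1).choose 2 * (x : ℂ)⁻¹ ^ (q + 2) * bilateralZeta θ 0 -
          q * (x : ℂ)⁻¹ ^ (q + 1) * bilateralZeta θ 1 + (x : ℂ)⁻¹ ^ q * bilateralZeta θ 2)) := by
  have h := hasSum_fourier_mul_of_partialFraction θ (p := ![0, x]) (m := ![q, 2])
    (a := ![fun j => (q + 1 - j) * (x : ℂ)⁻¹ ^ (q + 2 - j),
      fun j => (-1) ^ j * (q + 1 - j).choose (2 - j) * (x : ℂ)⁻¹ ^ (q + 2 - j)])
    (g := fun n : ℤ => (n : ℂ)⁻¹ ^ q * ((n : ℂ) - x)⁻¹ ^ 2)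
    (by simp [Fin.forall_fin_two, hq]) (by simp [Fin.sum_univ_two]) fun n => ?_
  · simpa [Fin.sum_univ_two, Finset.sum_range_succ _ 2, Finset.sum_range_succ _ 1, sub_eq_add_neg]
      using h
  · simpa [Fin.sum_univ_two, Finset.sum_range_succ _ 1] using
      inv_pow_mul_inv_sub_sq_add_piSingle n hx hq

end TwoPoles

section DoubleSeries

theorem fourier_mul_fourier (n : ℤ) (θ φ : UnitAddCircle) :
    fourier n θ * fourier n φ = fourier n (θ + φ) := by
  simp only [fourier_apply, smul_add, AddCircle.toCircle_add, Circle.coe_mul]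

theorem norm_inv_intCast_le_one (n : ℤ) : ‖(n : ℂ)⁻¹‖ ≤ 1 := by
  rcases eq_or_ne n 0 with rfl | hn
  · simp
  · rw [norm_inv, Complex.norm_intCast]
    exact inv_le_one_of_one_le₀ (mod_cast Int.one_le_abs hn)

theorem summable_inv_intCast_pow {k : ℕ} (hk : 2 ≤ k) : Summable fun n : ℤ => ‖(n : ℂ)⁻¹ ^ k‖ := by
  simpa only [Int.cast_zero, sub_zero] using summable_norm_inv_int_sub_pow 0 hk

/-- The Mordell–Tornheim type double series `∑ e(xθ) e(yφ) / (x ^ p * y ^ q * (x - y) ^ 2)` over the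
pairs of integers for which no denominator vanishes: the others are dropped by `0⁻¹ = 0`. -/
noncomputable def mordellTornheim (p q : ℕ) (θ φ : UnitAddCircle) : ℂ :=
  ∑' t : ℤ × ℤ, fourier t.1 θ * fourier t.2 φ *
    ((t.1 : ℂ)⁻¹ ^ p * (t.2 : ℂ)⁻¹ ^ q * ((t.1 : ℂ) - t.2)⁻¹ ^ 2)

theorem mordellTornheim_comm (p q : ℕ) (θ φ : UnitAddCircle) :
    mordellTornheim p q θ φ = mordellTornheim q p φ θ := by
  rw [mordellTornheim, ← (Equiv.prodComm ℤ ℤ).tsum_eq, mordellTornheim]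
  refine tsum_congr fun t => ?_
  rw [Equiv.prodComm_apply, Prod.fst_swap, Prod.snd_swap, ← neg_sub (t.1 : ℂ), inv_neg, neg_sq]
  ring

variable {p q : ℕ} (θ φ : UnitAddCircle)

theorem summable_mordellTornheim (hp : 2 ≤ p) (hq : 2 ≤ q) :
    Summable fun t : ℤ × ℤ => fourier t.1 θ * fourier t.2 φ *
      ((t.1 : ℂ)⁻¹ ^ p * (t.2 : ℂ)⁻¹ ^ q * ((t.1 : ℂ) - t.2)⁻¹ ^ 2) := by
  refine .of_norm_bounded ((summable_inv_intCast_pow hp).mul_norm (summable_inv_intCast_pow hq))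
    fun t => ?_
  have h : ‖((t.1 : ℂ) - t.2)⁻¹ ^ 2‖ ≤ 1 := by
    rw [norm_pow, ← Int.cast_sub]
    exact pow_le_one₀ (norm_nonneg _) (norm_inv_intCast_le_one _)
  simpa only [norm_mul, norm_fourier_apply, one_mul] using
    mul_le_of_le_one_right (norm_nonneg ((t.1 : ℂ)⁻¹ ^ p * (t.2 : ℂ)⁻¹ ^ q)) h

theorem hasSum_mordellTornheim (hp : 2 ≤ p) (hq : 2 ≤ q) :
    HasSum (fun t : ℤ × ℤ => fourier t.1 θ * fourier t.2 φ *
      ((t.1 : ℂ)⁻¹ ^ p * (t.2 : ℂ)⁻¹ ^ q * ((t.1 : ℂ) - t.2)⁻¹ ^ 2)) (mordellTornheim p q θ φ) :=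
  (summable_mordellTornheim θ φ hp hq).hasSum

theorem hasSum_mordellTornheim_fiber (hp : p ≠ 0) (hq : q ≠ 0) (x : ℤ) :
    HasSum (fun y : ℤ => fourier x θ * fourier y φ *
        ((x : ℂ)⁻¹ ^ p * (y : ℂ)⁻¹ ^ q * ((x : ℂ) - y)⁻¹ ^ 2))
      (∑ j ∈ Finset.range (q + 1), (q + 1 - j) * bilateralZeta φ j *
          (fourier x θ * (x : ℂ)⁻¹ ^ (p + q + 2 - j)) +
        ((q + 1).choose 2 * bilateralZeta φ 0 * (fourier x (θ + φ) * (x : ℂ)⁻¹ ^ (p + q + 2)) -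
          q * bilateralZeta φ 1 * (fourier x (θ + φ) * (x : ℂ)⁻¹ ^ (p + q + 1)) +
          bilateralZeta φ 2 * (fourier x (θ + φ) * (x : ℂ)⁻¹ ^ (p + q)))) := by
  rcases eq_or_ne x 0 with rfl | hx
  · have h : ∀ j ∈ Finset.range (q + 1), p + q + 2 - j ≠ 0 := fun j hj => by
      have := Finset.mem_range.mp hj
      lia
    convert! (hasSum_zero : HasSum (fun _ : ℤ => (0 : ℂ)) 0) using 1
    · simp [hp]
    · rw [Finset.sum_eq_zero fun j hj => by simp [h j hj]]
      simp [hp]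
  convert! (hasSum_fourier_mul_inv_pow_mul_inv_sub_sq φ hq hx).mul_left
    (fourier x θ * (x : ℂ)⁻¹ ^ p) using 1
  · funext y
    rw [← neg_sub (y : ℂ) x, inv_neg, neg_sq]
    ring
  · rw [← fourier_mul_fourier, mul_add, Finset.mul_sum]
    congr 1
    · refine Finset.sum_congr rfl fun j hj => ?_
      rw [show p + q + 2 - j = p + (q + 2 - j) by have := Finset.mem_range.mp hj; lia, pow_add]
      ring
    · ring

theorem mordellTornheim_eq (hp : 2 ≤ p) (hq : 2 ≤ q) :
    mordellTornheim p q θ φ =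
      ∑ j ∈ Finset.range (q + 1),
          (q + 1 - j) * bilateralZeta φ j * bilateralZeta θ (p + q + 2 - j) +
        ((q + 1).choose 2 * bilateralZeta φ 0 * bilateralZeta (θ + φ) (p + q + 2) -
          q * bilateralZeta φ 1 * bilateralZeta (θ + φ) (p + q + 1) +
          bilateralZeta φ 2 * bilateralZeta (θ + φ) (p + q)) := by
  have hfiber := (hasSum_mordellTornheim θ φ hp hq).prod_fiberwise
    (hasSum_mordellTornheim_fiber θ φ (by lia) (by lia))
  refine hfiber.unique (.add (hasSum_sum fun j hj => .mul_left _ ?_)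
    (.add (.sub (.mul_left _ ?_) (.mul_left _ ?_)) (.mul_left _ ?_)))
  · have := Finset.mem_range.mp hj
    exact hasSum_fourier_mul_inv_pow θ (by lia)
  all_goals exact hasSum_fourier_mul_inv_pow (θ + φ) (by lia)

end DoubleSeries

section ThreeDoublePoles

/-- The coefficient of `(n - p)⁻¹ ^ j` in the Laurent expansion at `p` of
`(n - p)⁻¹ ^ 2 * (n - q)⁻¹ ^ 2 * (n - r)⁻¹ ^ 2`, where `s = (q - p)⁻¹` and `t = (r - p)⁻¹`. -/
def doublePoleCoeff (s t : ℂ) : ℕ → ℂ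
  | 0 => s ^ 2 * t ^ 2 * (3 * s ^ 2 + 4 * s * t + 3 * t ^ 2)
  | 1 => 2 * (s ^ 2 * t ^ 2) * (s + t)
  | 2 => s ^ 2 * t ^ 2
  | _ => 0

theorem sum_doublePoleCoeff_one {x y z : ℂ} (hxy : x ≠ y) (hyz : y ≠ z) (hzx : z ≠ x) :
    doublePoleCoeff (y - x)⁻¹ (z - x)⁻¹ 1 + doublePoleCoeff (z - y)⁻¹ (x - y)⁻¹ 1 +
      doublePoleCoeff (x - z)⁻¹ (y - z)⁻¹ 1 = 0 := by
  have hxy' := sub_ne_zero.mpr hxy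
  have hyz' := sub_ne_zero.mpr hyz
  have hzx' := sub_ne_zero.mpr hzx
  rw [← neg_sub x y, ← neg_sub y z, ← neg_sub z x]
  simp only [doublePoleCoeff]
  field_simp
  ring

theorem doublePoleCoeff_zero {x y z : ℂ} (hxy : x ≠ y) (hyz : y ≠ z) (hzx : z ≠ x) :
    doublePoleCoeff (y - x)⁻¹ (z - x)⁻¹ 0 =
      (doublePoleCoeff (z - y)⁻¹ (x - y)⁻¹ 1 * (x - y)⁻¹ +
        doublePoleCoeff (z - y)⁻¹ (x - y)⁻¹ 2 * (x - y)⁻¹ ^ 2) +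
      (doublePoleCoeff (x - z)⁻¹ (y - z)⁻¹ 1 * (x - z)⁻¹ +
        doublePoleCoeff (x - z)⁻¹ (y - z)⁻¹ 2 * (x - z)⁻¹ ^ 2) := by
  have hxy' := sub_ne_zero.mpr hxy
  have hyz' := sub_ne_zero.mpr hyz
  have hzx' := sub_ne_zero.mpr hzx
  rw [← neg_sub x y, ← neg_sub y z, ← neg_sub z x]
  simp only [doublePoleCoeff]
  field_simp
  ring

theorem inv_sub_sq_mul_inv_sub_sq_mul_inv_sub_sq {n x y z : ℂ} (hnx : n ≠ x) (hny : n ≠ y)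
    (hnz : n ≠ z) (hxy : x ≠ y) (hyz : y ≠ z) (hzx : z ≠ x) :
    (n - x)⁻¹ ^ 2 * (n - y)⁻¹ ^ 2 * (n - z)⁻¹ ^ 2 =
      (doublePoleCoeff (y - x)⁻¹ (z - x)⁻¹ 1 * (n - x)⁻¹ +
        doublePoleCoeff (y - x)⁻¹ (z - x)⁻¹ 2 * (n - x)⁻¹ ^ 2) +
      (doublePoleCoeff (z - y)⁻¹ (x - y)⁻¹ 1 * (n - y)⁻¹ +
        doublePoleCoeff (z - y)⁻¹ (x - y)⁻¹ 2 * (n - y)⁻¹ ^ 2) +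
      (doublePoleCoeff (x - z)⁻¹ (y - z)⁻¹ 1 * (n - z)⁻¹ +
        doublePoleCoeff (x - z)⁻¹ (y - z)⁻¹ 2 * (n - z)⁻¹ ^ 2) := by
  have hnx' := sub_ne_zero.mpr hnx
  have hny' := sub_ne_zero.mpr hny
  have hnz' := sub_ne_zero.mpr hnz
  have hxy' := sub_ne_zero.mpr hxy
  have hyz' := sub_ne_zero.mpr hyz
  have hzx' := sub_ne_zero.mpr hzx
  rw [← neg_sub x y, ← neg_sub y z, ← neg_sub z x]
  simp only [doublePoleCoeff]
  field_simp
  ring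

theorem inv_sub_sq_mul_inv_sub_sq_mul_inv_sub_sq_add_piSingle (n : ℤ) {x y z : ℤ} (hxy : x ≠ y)
    (hyz : y ≠ z) (hzx : z ≠ x) :
    ((n : ℂ) - x)⁻¹ ^ 2 * ((n : ℂ) - y)⁻¹ ^ 2 * ((n : ℂ) - z)⁻¹ ^ 2 +
        ((Pi.single x (doublePoleCoeff ((y : ℂ) - x)⁻¹ ((z : ℂ) - x)⁻¹ 0) : ℤ → ℂ) n +
          (Pi.single y (doublePoleCoeff ((z : ℂ) - y)⁻¹ ((x : ℂ) - y)⁻¹ 0) : ℤ → ℂ) n +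
          (Pi.single z (doublePoleCoeff ((x : ℂ) - z)⁻¹ ((y : ℂ) - z)⁻¹ 0) : ℤ → ℂ) n) =
      (doublePoleCoeff ((y : ℂ) - x)⁻¹ ((z : ℂ) - x)⁻¹ 1 * ((n : ℂ) - x)⁻¹ +
        doublePoleCoeff ((y : ℂ) - x)⁻¹ ((z : ℂ) - x)⁻¹ 2 * ((n : ℂ) - x)⁻¹ ^ 2) +
      (doublePoleCoeff ((z : ℂ) - y)⁻¹ ((x : ℂ) - y)⁻¹ 1 * ((n : ℂ) - y)⁻¹ +
        doublePoleCoeff ((z : ℂ) - y)⁻¹ ((x : ℂ) - y)⁻¹ 2 * ((n : ℂ) - y)⁻¹ ^ 2) +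
      (doublePoleCoeff ((x : ℂ) - z)⁻¹ ((y : ℂ) - z)⁻¹ 1 * ((n : ℂ) - z)⁻¹ +
        doublePoleCoeff ((x : ℂ) - z)⁻¹ ((y : ℂ) - z)⁻¹ 2 * ((n : ℂ) - z)⁻¹ ^ 2) := by
  have hxy' : (x : ℂ) ≠ y := mod_cast hxy
  have hyz' : (y : ℂ) ≠ z := mod_cast hyz
  have hzx' : (z : ℂ) ≠ x := mod_cast hzx
  rcases eq_or_ne n x with rfl | hnx
  · simp [hxy, hzx.symm, doublePoleCoeff_zero hxy' hyz' hzx']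
  rcases eq_or_ne n y with rfl | hny
  · simp [hyz, hxy.symm, doublePoleCoeff_zero hyz' hzx' hxy', add_comm]
  rcases eq_or_ne n z with rfl | hnz
  · simp [hzx, hyz.symm, doublePoleCoeff_zero hzx' hxy' hyz']
  rw [inv_sub_sq_mul_inv_sub_sq_mul_inv_sub_sq (mod_cast hnx) (mod_cast hny) (mod_cast hnz)
    hxy' hyz' hzx', Pi.single_eq_of_ne hnx, Pi.single_eq_of_ne hny, Pi.single_eq_of_ne hnz]
  ring

/-- The contribution of a double pole to a bilateral sum twisted by `θ`, in terms of the inverse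
distances `s` and `t` to the two other double poles. -/
noncomputable def doublePoleTerm (θ : UnitAddCircle) (s t : ℂ) : ℂ :=
  ∑ j ∈ Finset.range 3, doublePoleCoeff s t j * bilateralZeta θ j

theorem hasSum_fourier_mul_three_double_poles (θ : UnitAddCircle) {x y z : ℤ} (hxy : x ≠ y)
    (hyz : y ≠ z) (hzx : z ≠ x) :
    HasSum (fun n : ℤ => fourier n θ *
        (((n : ℂ) - x)⁻¹ ^ 2 * ((n : ℂ) - y)⁻¹ ^ 2 * ((n : ℂ) - z)⁻¹ ^ 2))
      (fourier x θ * doublePoleTerm θ ((y : ℂ) - x)⁻¹ ((z : ℂ) - x)⁻¹ +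
        fourier y θ * doublePoleTerm θ ((z : ℂ) - y)⁻¹ ((x : ℂ) - y)⁻¹ +
        fourier z θ * doublePoleTerm θ ((x : ℂ) - z)⁻¹ ((y : ℂ) - z)⁻¹) := by
  have h := hasSum_fourier_mul_of_partialFraction θ (p := ![x, y, z]) (m := fun _ => 2)
    (a := ![doublePoleCoeff ((y : ℂ) - x)⁻¹ ((z : ℂ) - x)⁻¹,
      doublePoleCoeff ((z : ℂ) - y)⁻¹ ((x : ℂ) - y)⁻¹,
      doublePoleCoeff ((x : ℂ) - z)⁻¹ ((y : ℂ) - z)⁻¹])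
    (g := fun n : ℤ => ((n : ℂ) - x)⁻¹ ^ 2 * ((n : ℂ) - y)⁻¹ ^ 2 * ((n : ℂ) - z)⁻¹ ^ 2)
    (fun _ => two_ne_zero) ?_ fun n => ?_
  · simpa [Fin.sum_univ_three, doublePoleTerm] using h
  · simpa [Fin.sum_univ_three] using
      sum_doublePoleCoeff_one (x := x) (y := y) (z := z) (mod_cast hxy) (mod_cast hyz)
        (mod_cast hzx)
  · simpa [Fin.sum_univ_three, Finset.sum_range_succ _ 1] using
      inv_sub_sq_mul_inv_sub_sq_mul_inv_sub_sq_add_piSingle n hxy hyz hzx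

end ThreeDoublePoles

section VandermondeWeight

/-- The inverse square `∏_{i < j} (v i - v j) ^ (-2)` of the Vandermonde determinant, with value `0`
on tuples that are not injective: the summand of the zeta function of type `A` at `(2, …, 2)`. -/
noncomputable def vandermondeWeight {r : ℕ} (v : Fin r → ℤ) : ℂ :=
  ((Matrix.vandermonde v).det : ℂ)⁻¹ ^ 2

theorem vandermondeWeight_eq_zero {r : ℕ} {v : Fin r → ℤ} (hv : ¬ v.Injective) :
    vandermondeWeight v = 0 := by
  rw [vandermondeWeight, not_ne_iff.mp (mt Matrix.det_vandermonde_ne_zero_iff.mp hv), Int.cast_zero,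
    inv_zero, zero_pow two_ne_zero]

theorem vandermondeWeight_comp_perm {r : ℕ} (v : Fin r → ℤ) (σ : Equiv.Perm (Fin r)) :
    vandermondeWeight (v ∘ σ) = vandermondeWeight v := by
  have h : (Matrix.vandermonde (v ∘ σ)).det =
      ((Equiv.Perm.sign σ : ℤˣ) : ℤ) * (Matrix.vandermonde v).det := by
    rw [← Int.cast_id (n := (Equiv.Perm.sign σ : ℤ)), ← Matrix.det_permute]
    rfl
  have hsign : ((Equiv.Perm.sign σ : ℤ) : ℂ) ^ 2 = 1 := by
    rw [← Int.cast_pow, ← Units.val_pow_eq_pow_val, Int.units_sq, Units.val_one, Int.cast_one]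
  rw [vandermondeWeight, vandermondeWeight, h, Int.cast_mul, mul_inv, mul_pow, inv_pow _ 2, hsign,
    inv_one, one_mul]

theorem vandermondeWeight_add_const {r : ℕ} (v : Fin r → ℤ) (c : ℤ) :
    vandermondeWeight (fun i => v i + c) = vandermondeWeight v := by
  rw [vandermondeWeight, Matrix.det_vandermonde_add, vandermondeWeight]

theorem vandermondeWeight_neg {r : ℕ} (v : Fin r → ℤ) :
    vandermondeWeight (-v) = vandermondeWeight v := by
  simp only [vandermondeWeight, Matrix.det_vandermonde, Int.cast_prod, ← Finset.prod_inv_distrib,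
    ← Finset.prod_pow]
  refine Finset.prod_congr rfl fun i _ => Finset.prod_congr rfl fun j _ => ?_
  rw [Pi.neg_apply, Pi.neg_apply, neg_sub_neg, ← neg_sub, Int.cast_neg, inv_neg, neg_sq]

theorem norm_vandermondeWeight_le_one {r : ℕ} (v : Fin r → ℤ) : ‖vandermondeWeight v‖ ≤ 1 := by
  rw [vandermondeWeight, norm_pow]
  exact pow_le_one₀ (norm_nonneg _) (norm_inv_intCast_le_one _)

theorem vandermondeWeight_cons_zero {r : ℕ} (v : Fin r → ℤ) :
    vandermondeWeight (Matrix.vecCons 0 v) = (∏ i, (v i : ℂ)⁻¹ ^ 2) * vandermondeWeight v := by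
  simp only [vandermondeWeight, Matrix.det_vandermonde, Fin.prod_univ_succ (n := r)]
  simp [Finset.prod_pow, mul_pow, mul_comm]

theorem vandermondeWeight_three (x y z : ℤ) : vandermondeWeight ![x, y, z] =
    ((y : ℂ) - x)⁻¹ ^ 2 * ((z : ℂ) - x)⁻¹ ^ 2 * ((z : ℂ) - y)⁻¹ ^ 2 := by
  have h : (Matrix.vandermonde ![x, y, z]).det = (y - x) * (z - x) * (z - y) := by
    rw [Matrix.det_fin_three]
    simp [Matrix.vandermonde]
    ring
  simp only [vandermondeWeight, h, Int.cast_mul, Int.cast_sub, mul_inv, mul_pow]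

theorem vandermondeWeight_zero_cons_three (x y z : ℤ) : vandermondeWeight ![0, x, y, z] =
    (x : ℂ)⁻¹ ^ 2 * (y : ℂ)⁻¹ ^ 2 * ((x : ℂ) - y)⁻¹ ^ 2 *
      ((z : ℂ)⁻¹ ^ 2 * ((z : ℂ) - x)⁻¹ ^ 2 * ((z : ℂ) - y)⁻¹ ^ 2) := by
  rw [vandermondeWeight_cons_zero, Fin.prod_univ_three, vandermondeWeight_three,
    ← neg_sub (x : ℂ), inv_neg, neg_sq]
  simp only [Matrix.cons_val]
  ring

end VandermondeWeight

section TypeA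

theorem fourier_eq_of_modEq {θ : UnitAddCircle} {N : ℤ} (hθ : N • θ = 0) {a b : ℤ}
    (hab : a ≡ b [ZMOD N]) : fourier a θ = fourier b θ := by
  obtain ⟨k, hk⟩ := hab.dvd
  rw [fourier_apply, fourier_apply, ← sub_add_cancel b a, hk, add_smul, mul_comm, mul_smul, hθ,
    smul_zero, zero_add]

/-- Summing `fourier (x + y + z) θ * vandermondeWeight ![0, x, y, z]` over `z`, this is the
contribution of the pole `z = 0`. -/
noncomputable def zeroPoleTerm (θ : UnitAddCircle) (t : ℤ × ℤ) : ℂ :=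
  fourier t.1 θ * fourier t.2 θ * ((t.1 : ℂ)⁻¹ ^ 2 * (t.2 : ℂ)⁻¹ ^ 2 * ((t.1 : ℂ) - t.2)⁻¹ ^ 2) *
    doublePoleTerm θ (t.1 : ℂ)⁻¹ (t.2 : ℂ)⁻¹

/-- The map on `ℤ × ℤ` induced, up to a translation, by a cyclic permutation of `0, x, y`. -/
def rotatePair : ℤ × ℤ ≃ ℤ × ℤ where
  toFun t := (t.2 - t.1, -t.1)
  invFun t := (-t.2, t.1 - t.2)
  left_inv t := by simp
  right_inv t := by simp

/-- The sum of `e((u₁ + ⋯ + uᵣ)θ) / ∏_{i < j} (u i - u j) ^ 2` over integer vectors with distinct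
entries, normalised by `u₀ = 0`. -/
noncomputable def typeASeries (r : ℕ) (θ : UnitAddCircle) : ℂ :=
  ∑' u : Fin r → ℤ, fourier (∑ i, u i) θ * vandermondeWeight (Matrix.vecCons 0 u)

theorem typeASeries_neg (r : ℕ) (θ : UnitAddCircle) : typeASeries r (-θ) = typeASeries r θ := by
  rw [typeASeries, ← (Equiv.neg _).tsum_eq, typeASeries]
  refine tsum_congr fun u => ?_
  have hcons : (Matrix.vecCons 0 (-u) : Fin (r + 1) → ℤ) = -Matrix.vecCons 0 u := by
    rw [Matrix.neg_cons, neg_zero]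
  simp only [Equiv.neg_apply, hcons, vandermondeWeight_neg, Pi.neg_apply, Finset.sum_neg_distrib,
    fourier_apply, neg_smul, smul_neg, neg_neg]

theorem hasSum_zeroPoleTerm (θ : UnitAddCircle) :
    HasSum (zeroPoleTerm θ)
      (bilateralZeta θ 2 * mordellTornheim 4 4 θ θ +
        4 * bilateralZeta θ 1 * mordellTornheim 5 4 θ θ -
        6 * mordellTornheim 6 4 θ θ - 4 * mordellTornheim 5 5 θ θ) := by
  have h := fun (p q : ℕ) (hp : 2 ≤ p) (hq : 2 ≤ q) (c : ℂ) =>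
    (hasSum_mordellTornheim θ θ hp hq).mul_left c
  have hsum := (((((h 4 4 (by lia) (by lia) (bilateralZeta θ 2)).add
    (h 5 4 (by lia) (by lia) (2 * bilateralZeta θ 1))).add
    (h 4 5 (by lia) (by lia) (2 * bilateralZeta θ 1))).sub
    (h 6 4 (by lia) (by lia) 3)).sub (h 4 6 (by lia) (by lia) 3)).sub
    (h 5 5 (by lia) (by lia) 4)
  convert! hsum using 1
  · funext t
    simp only [zeroPoleTerm, doublePoleTerm, Finset.sum_range_succ, Finset.sum_range_zero,
      doublePoleCoeff, bilateralZeta_zero]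
    ring
  · rw [mordellTornheim_comm 4 5, mordellTornheim_comm 4 6]
    ring

theorem zeroPoleTerm_rotatePair {θ : UnitAddCircle} (hθ : (4 : ℤ) • θ = 0) (x y : ℤ) :
    zeroPoleTerm θ (rotatePair (x, y)) = fourier x θ * fourier y θ *
      ((x : ℂ)⁻¹ ^ 2 * (y : ℂ)⁻¹ ^ 2 * ((x : ℂ) - y)⁻¹ ^ 2) *
        (fourier x θ * doublePoleTerm θ ((y : ℂ) - x)⁻¹ (0 - (x : ℂ))⁻¹) := by
  have hexp : fourier (y - x) θ * fourier (-x) θ = fourier x θ * fourier y θ * fourier x θ := by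
    rw [← fourier_add, ← fourier_add, ← fourier_add]
    exact fourier_eq_of_modEq hθ (Int.modEq_iff_dvd.mpr ⟨x, by ring⟩)
  simp only [zeroPoleTerm, rotatePair, Equiv.coe_fn_mk, hexp]
  have hsq : ((x : ℂ) - y)⁻¹ ^ 2 = ((y : ℂ) - x)⁻¹ ^ 2 := by rw [← neg_sub, inv_neg, neg_sq]
  push_cast
  rw [zero_sub, sub_neg_eq_add, sub_add_cancel, inv_neg, neg_sq, hsq]
  ring

theorem zeroPoleTerm_rotatePair_symm {θ : UnitAddCircle} (hθ : (4 : ℤ) • θ = 0) (x y : ℤ) :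
    zeroPoleTerm θ (rotatePair.symm (x, y)) = fourier x θ * fourier y θ *
      ((x : ℂ)⁻¹ ^ 2 * (y : ℂ)⁻¹ ^ 2 * ((x : ℂ) - y)⁻¹ ^ 2) *
        (fourier y θ * doublePoleTerm θ (0 - (y : ℂ))⁻¹ ((x : ℂ) - y)⁻¹) := by
  have hexp : fourier (-y) θ * fourier (x - y) θ = fourier x θ * fourier y θ * fourier y θ := by
    rw [← fourier_add, ← fourier_add, ← fourier_add]
    exact fourier_eq_of_modEq hθ (Int.modEq_iff_dvd.mpr ⟨y, by ring⟩)
  simp only [zeroPoleTerm, rotatePair, Equiv.coe_fn_symm_mk, hexp]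
  push_cast
  rw [← neg_add', add_sub_cancel, zero_sub, inv_neg, inv_neg, neg_sq, neg_sq]
  ring

theorem hasSum_fourier_mul_vandermondeWeight_fiber {θ : UnitAddCircle} (hθ : (4 : ℤ) • θ = 0)
    (x y : ℤ) :
    HasSum (fun z : ℤ => fourier (∑ i, ![x, y, z] i) θ * vandermondeWeight ![0, x, y, z])
      (zeroPoleTerm θ (x, y) + zeroPoleTerm θ (rotatePair (x, y)) +
        zeroPoleTerm θ (rotatePair.symm (x, y))) := by
  simp only [Fin.sum_univ_three, Matrix.cons_val]
  rw [zeroPoleTerm_rotatePair hθ, zeroPoleTerm_rotatePair_symm hθ, zeroPoleTerm, ← mul_add,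
    ← mul_add]
  rcases eq_or_ne ((x : ℂ)⁻¹ ^ 2 * (y : ℂ)⁻¹ ^ 2 * ((x : ℂ) - y)⁻¹ ^ 2) 0 with h | h
  · simpa only [vandermondeWeight_zero_cons_three, h, zero_mul, mul_zero] using hasSum_zero
  have hx : 0 ≠ x := by
    rintro rfl
    simp at h
  have hy : y ≠ 0 := by
    rintro rfl
    simp at h
  have hxy : x ≠ y := by
    rintro rfl
    simp at h
  convert! (hasSum_fourier_mul_three_double_poles θ hx hxy hy).mul_left
    (fourier x θ * fourier y θ *
      ((x : ℂ)⁻¹ ^ 2 * (y : ℂ)⁻¹ ^ 2 * ((x : ℂ) - y)⁻¹ ^ 2)) using 1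
  · funext z
    rw [vandermondeWeight_zero_cons_three, fourier_add, fourier_add, Int.cast_zero, sub_zero]
    ring
  · rw [fourier_zero, one_mul, Int.cast_zero, sub_zero, sub_zero]

/-- Triples of integers as vectors, with the last coordinate split off. -/
def tripleEquiv : (ℤ × ℤ) × ℤ ≃ (Fin 3 → ℤ) where
  toFun t := ![t.1.1, t.1.2, t.2]
  invFun u := ((u 0, u 1), u 2)
  left_inv _ := rfl
  right_inv u := by
    ext i
    fin_cases i <;> rfl

theorem summable_norm_vandermondeWeight_cons_three :
    Summable fun u : Fin 3 → ℤ => ‖vandermondeWeight (Matrix.vecCons 0 u)‖ := by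
  have hsq := summable_inv_intCast_pow le_rfl
  have hcube : Summable fun t : (ℤ × ℤ) × ℤ =>
      ‖(t.1.1 : ℂ)⁻¹ ^ 2‖ * ‖(t.1.2 : ℂ)⁻¹ ^ 2‖ * ‖(t.2 : ℂ)⁻¹ ^ 2‖ :=
    (hsq.mul_of_nonneg hsq (fun _ => norm_nonneg _) fun _ => norm_nonneg _).mul_of_nonneg hsq
      (fun _ => mul_nonneg (norm_nonneg _) (norm_nonneg _)) fun _ => norm_nonneg _
  rw [← tripleEquiv.summable_iff]
  refine hcube.of_nonneg_of_le (fun _ => norm_nonneg _) fun t => ?_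
  rw [Function.comp_apply, vandermondeWeight_cons_zero, Fin.prod_univ_three, norm_mul, norm_mul,
    norm_mul]
  exact mul_le_of_le_one_right (by positivity) (norm_vandermondeWeight_le_one _)

theorem summable_fourier_mul_vandermondeWeight (θ : UnitAddCircle) :
    Summable fun u : Fin 3 → ℤ =>
      fourier (∑ i, u i) θ * vandermondeWeight (Matrix.vecCons 0 u) :=
  .of_norm_bounded summable_norm_vandermondeWeight_cons_three fun u => by
    rw [norm_mul, norm_fourier_apply, one_mul]

theorem typeASeries_three {θ : UnitAddCircle} (hθ : (4 : ℤ) • θ = 0) :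
    typeASeries 3 θ = 3 * (bilateralZeta θ 2 * mordellTornheim 4 4 θ θ +
        4 * bilateralZeta θ 1 * mordellTornheim 5 4 θ θ -
        6 * mordellTornheim 6 4 θ θ - 4 * mordellTornheim 5 5 θ θ) := by
  have hzero := hasSum_zeroPoleTerm θ
  have hsum := tripleEquiv.summable_iff.mpr (summable_fourier_mul_vandermondeWeight θ)
  have hfiber := hsum.hasSum.prod_fiberwise fun t =>
    hasSum_fourier_mul_vandermondeWeight_fiber hθ t.1 t.2
  have hpoles := (hzero.add (rotatePair.hasSum_iff.mpr hzero)).add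
    (rotatePair.symm.hasSum_iff.mpr hzero)
  rw [typeASeries, ← tripleEquiv.tsum_eq]
  refine (hfiber.unique hpoles).trans ?_
  ring

end TypeA

section Symmetrization

variable {α E : Type*} [AddCommGroup α] {r : ℕ}

/-- The tuple `(0, u₁, …, uᵣ) ∘ σ`, translated so that its `0`-th entry is `0`, which is then left
out. -/
def permuteVecCons (σ : Equiv.Perm (Fin (r + 1))) (u : Fin r → α) : Fin r → α := fun i =>
  (Matrix.vecCons 0 u : Fin (r + 1) → α) (σ i.succ) - (Matrix.vecCons 0 u : Fin (r + 1) → α) (σ 0)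

theorem vecCons_permuteVecCons (σ : Equiv.Perm (Fin (r + 1))) (u : Fin r → α) (i : Fin (r + 1)) :
    (Matrix.vecCons 0 (permuteVecCons σ u) : Fin (r + 1) → α) i =
      (Matrix.vecCons 0 u : Fin (r + 1) → α) (σ i) +
        -(Matrix.vecCons 0 u : Fin (r + 1) → α) (σ 0) := by
  rw [← sub_eq_add_neg]
  cases i using Fin.cases with
  | zero => rw [Matrix.cons_val_zero, sub_self]
  | succ i => rw [Matrix.cons_val_succ, permuteVecCons]

variable [LinearOrder α] [IsOrderedAddMonoid α]

/-- The fundamental domain for the action of the permutations of `Fin (r + 1)` on tuples with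
distinct entries modulo translation. -/
abbrev StrictMonoTuple (α : Type*) [AddCommGroup α] [LinearOrder α] (r : ℕ) : Type _ :=
  {u : Fin r → α // StrictMono (Matrix.vecCons 0 u : Fin (r + 1) → α)}

theorem permuteVecCons_injective :
    Function.Injective fun t : Equiv.Perm (Fin (r + 1)) × StrictMonoTuple α r =>
      permuteVecCons t.1 t.2.1 := by
  rintro ⟨σ, u, hu⟩ ⟨τ, v, hv⟩ h
  set w : Fin (r + 1) → α := Matrix.vecCons 0 (permuteVecCons σ u) with hw
  have hwσ (i) := vecCons_permuteVecCons σ u i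
  have hwτ (i) := vecCons_permuteVecCons τ v i
  rw [← hw] at hwσ
  rw [← show permuteVecCons σ u = permuteVecCons τ v from h, ← hw] at hwτ
  have hmono_sigma : StrictMono (w ∘ σ.symm) := fun i j hij => by
    simpa only [Function.comp_apply, hwσ, Equiv.apply_symm_apply, add_lt_add_iff_right] using hu hij
  have hmono_tau : StrictMono (w ∘ τ.symm) := fun i j hij => by
    simpa only [Function.comp_apply, hwτ, Equiv.apply_symm_apply, add_lt_add_iff_right] using hv hij
  have hcomp : w ∘ σ.symm = w ∘ τ.symm := by
    rw [← hmono_sigma.range_inj hmono_tau, EquivLike.range_comp, EquivLike.range_comp]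
  have hwinj : Function.Injective w := by
    simpa using hmono_sigma.injective
  obtain rfl : σ = τ := Equiv.symm_bijective.injective <| Equiv.ext fun i =>
    hwinj (congrFun hcomp i)
  have hconst : (Matrix.vecCons 0 u : Fin (r + 1) → α) (σ 0) =
      (Matrix.vecCons 0 v : Fin (r + 1) → α) (σ 0) := by
    have := (hwσ (σ.symm 0)).symm.trans (hwτ (σ.symm 0))
    simpa using this
  simp only [Prod.mk.injEq, Subtype.mk.injEq, true_and]
  funext i
  have := (hwσ (σ.symm i.succ)).symm.trans (hwτ (σ.symm i.succ))
  simpa [hconst] using this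

theorem exists_permuteVecCons_eq {u : Fin r → α}
    (hu : Function.Injective (Matrix.vecCons 0 u : Fin (r + 1) → α)) :
    ∃ t : Equiv.Perm (Fin (r + 1)) × StrictMonoTuple α r, permuteVecCons t.1 t.2.1 = u := by
  set w : Fin (r + 1) → α := Matrix.vecCons 0 u with hw
  have hmono : StrictMono (w ∘ Tuple.sort w) :=
    (Tuple.monotone_sort w).strictMono_of_injective (hu.comp (Tuple.sort w).injective)
  refine ⟨((Tuple.sort w).symm, ⟨permuteVecCons (Tuple.sort w) u, fun i j hij => ?_⟩), ?_⟩
  · simpa only [vecCons_permuteVecCons, add_lt_add_iff_right, ← hw] using! hmono hij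
  · funext i
    simp [permuteVecCons.eq_def (Tuple.sort w).symm, vecCons_permuteVecCons]

theorem tsum_vecCons_zero_eq_factorial_smul [AddCommGroup E] [UniformSpace E] [IsUniformAddGroup E]
    [CompleteSpace E] [T2Space E] {F : (Fin (r + 1) → α) → E}
    (hperm : ∀ v (σ : Equiv.Perm (Fin (r + 1))), F (v ∘ σ) = F v)
    (htrans : ∀ v c, F (fun i => v i + c) = F v)
    (hinj : ∀ v, ¬ Function.Injective v → F v = 0)
    (hF : Summable fun u : Fin r → α => F (Matrix.vecCons 0 u)) :
    ∑' u : Fin r → α, F (Matrix.vecCons 0 u) =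
      (r + 1).factorial • ∑' u : StrictMonoTuple α r, F (Matrix.vecCons 0 u.1) := by
  have hF_permute (t : Equiv.Perm (Fin (r + 1)) × StrictMonoTuple α r) :
      F (Matrix.vecCons 0 (permuteVecCons t.1 t.2.1)) = F (Matrix.vecCons 0 t.2.1) := by
    rw [funext (vecCons_permuteVecCons t.1 t.2.1), htrans, ← Function.comp_def, hperm]
  have hsupport : Function.support (fun u : Fin r → α => F (Matrix.vecCons 0 u)) ⊆
      Set.range fun t : Equiv.Perm (Fin (r + 1)) × StrictMonoTuple α r =>
        permuteVecCons t.1 t.2.1 := fun u hu =>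
    exists_permuteVecCons_eq (not_imp_comm.mp (hinj _) hu)
  have hsum := hF.comp_injective permuteVecCons_injective
  simp only [Function.comp_def, hF_permute] at hsum
  rw [← permuteVecCons_injective.tsum_eq hsupport, tsum_congr hF_permute, hsum.tsum_prod]
  simp only [tsum_fintype, Finset.sum_const, Finset.card_univ, Fintype.card_perm, Fintype.card_fin]

theorem strictMono_vecCons_zero_three {x y z : ℤ} :
    StrictMono (![0, x, y, z] : Fin 4 → ℤ) ↔ 0 < x ∧ x < y ∧ y < z := by
  simp [Fin.strictMono_iff_lt_succ, Fin.forall_fin_succ]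

/-- A strictly increasing sequence `0 < x < y < z` of integers, encoded by its successive gaps,
each lowered by `1`, from the largest entry down. -/
def gapEquiv : ℕ × ℕ × ℕ ≃ StrictMonoTuple ℤ 3 where
  toFun t := ⟨![t.2.2 + 1, t.2.2 + t.2.1 + 2, t.2.2 + t.2.1 + t.1 + 3],
    strictMono_vecCons_zero_three.mpr ⟨by lia, by lia, by lia⟩⟩
  invFun u := ((u.1 2 - u.1 1 - 1).toNat, (u.1 1 - u.1 0 - 1).toNat, (u.1 0 - 1).toNat)
  left_inv t := by
    simp only [Matrix.cons_val]
    ext <;> dsimp only <;> lia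
  right_inv u := by
    have hu := u.2
    have : u.1 = ![u.1 0, u.1 1, u.1 2] := by
      ext i
      fin_cases i <;> rfl
    rw [this, strictMono_vecCons_zero_three] at hu
    ext i
    fin_cases i <;> simp <;> lia

end Symmetrization

section CharacterFilter

theorem sum_range_fourier_div {N : ℕ} (hN : N ≠ 0) (n : ℤ) :
    ∑ k ∈ Finset.range N, fourier n ((k / N : ℝ) : UnitAddCircle) =
      if (N : ℤ) ∣ n then (N : ℂ) else 0 := by
  set ζ : ℂ := Complex.exp (2 * π * Complex.I / N) with hζ
  have hprim : IsPrimitiveRoot ζ N := Complex.isPrimitiveRoot_exp N hN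
  have hpow (k : ℕ) : fourier n ((k / N : ℝ) : UnitAddCircle) = (ζ ^ n) ^ k := by
    rw [fourier_coe_apply, hζ, ← Complex.exp_int_mul, ← Complex.exp_nat_mul]
    push_cast
    ring_nf
  simp only [hpow]
  split_ifs with h
  · simp only [(hprim.zpow_eq_one_iff_dvd n).mpr h, one_pow, Finset.sum_const, Finset.card_range,
      nsmul_eq_mul, mul_one]
  · rw [geom_sum_eq (mt (hprim.zpow_eq_one_iff_dvd n).mp h), ← zpow_natCast, ← zpow_mul, mul_comm,
      zpow_mul, zpow_natCast, hprim.pow_eq_one, one_zpow, sub_self, zero_div]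

theorem tsum_ite_dvd_sub_eq {ι : Type*} {f : ι → ℂ} (hf : Summable fun i => ‖f i‖) (s : ι → ℤ)
    {N : ℕ} (hN : N ≠ 0) (a : ℤ) :
    ∑' i, (if (N : ℤ) ∣ s i - a then f i else 0) =
      (N : ℂ)⁻¹ * ∑ k ∈ Finset.range N, fourier (-a) ((k / N : ℝ) : UnitAddCircle) *
        ∑' i, fourier (s i) ((k / N : ℝ) : UnitAddCircle) * f i := by
  have hsum (k : ℕ) : Summable fun i => fourier (s i) ((k / N : ℝ) : UnitAddCircle) * f i :=
    .of_norm_bounded hf fun i => by rw [norm_mul, norm_fourier_apply, one_mul]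
  simp only [← tsum_mul_left]
  rw [← Summable.tsum_finsetSum fun k _ => (hsum k).mul_left _, ← tsum_mul_left]
  refine tsum_congr fun i => ?_
  simp only [← mul_assoc, ← fourier_add, ← Finset.sum_mul]
  rw [neg_add_eq_sub, sum_range_fourier_div hN, mul_ite, ite_mul,
    inv_mul_cancel₀ (Nat.cast_ne_zero.mpr hN), one_mul, mul_zero, zero_mul]

theorem fourier_neg_two_div_four (k : ℕ) :
    fourier (-2) ((k / 4 : ℝ) : UnitAddCircle) = (-1) ^ k := by
  have h : 2 * π * Complex.I * (-2 : ℤ) * ((k / 4 : ℝ) : ℂ) / (1 : ℝ) =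
      -(k * (π * Complex.I)) := by
    push_cast
    ring
  rw [fourier_coe_apply, h, Complex.exp_neg, Complex.exp_nat_mul, Complex.exp_pi_mul_I, ← inv_pow,
    inv_neg_one]

theorem tsum_ite_four_dvd_sub_two :
    ∑' u : Fin 3 → ℤ,
        (if 4 ∣ ∑ i, u i - 2 then vandermondeWeight (Matrix.vecCons 0 u) else 0) =
      (typeASeries 3 ((0 : ℝ) : UnitAddCircle) - 2 * typeASeries 3 ((1 / 4 : ℝ) : UnitAddCircle) +
        typeASeries 3 ((1 / 2 : ℝ) : UnitAddCircle)) / 4 := by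
  have hneg : typeASeries 3 ((3 / 4 : ℝ) : UnitAddCircle) =
      typeASeries 3 ((1 / 4 : ℝ) : UnitAddCircle) := by
    rw [← typeASeries_neg, ← AddCircle.coe_neg, show (-(3 / 4) : ℝ) = 1 / 4 - 1 by norm_num,
      AddCircle.coe_sub, AddCircle.coe_period, sub_zero]
  have h := tsum_ite_dvd_sub_eq summable_norm_vandermondeWeight_cons_three (fun u => ∑ i, u i)
    four_ne_zero 2
  simp only [Nat.cast_ofNat, fourier_neg_two_div_four] at h
  rw [typeASeries] at hneg
  simp only [h, typeASeries, Finset.sum_range_succ, Finset.sum_range_zero, Nat.cast_zero,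
    Nat.cast_one, Nat.cast_ofNat, zero_div, show (2 / 4 : ℝ) = 1 / 2 by norm_num, hneg]
  ring

end CharacterFilter

section Values

theorem sum_bernoulliFun (n : ℕ) (x : ℝ) :
    ∑ k ∈ Finset.range (n + 1), ((n + 1).choose k : ℝ) * bernoulliFun k x = (n + 1) * x ^ n := by
  have h := congrArg (Polynomial.aeval x) (Polynomial.sum_bernoulli n)
  rw [map_sum, Polynomial.aeval_monomial] at h
  simpa only [bernoulliFun, Polynomial.eval_map_algebraMap, map_smul, Rat.smul_def, map_add,
    map_natCast, map_one, Rat.cast_natCast] using h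

theorem bernoulliFun_eq_of_forall_sum_eq {x : ℝ} {N : ℕ} {b : ℕ → ℝ}
    (hb : ∀ n < N, ∑ k ∈ Finset.range (n + 1), ((n + 1).choose k : ℝ) * b k = (n + 1) * x ^ n)
    {n : ℕ} (hn : n < N) : bernoulliFun n x = b n := by
  induction n using Nat.strong_induction_on with
  | _ n ih =>
    have h := (sum_bernoulliFun n x).trans (hb n hn).symm
    rw [Finset.sum_range_succ, Finset.sum_range_succ, Finset.sum_congr rfl fun k hk => by
      rw [ih k (Finset.mem_range.mp hk) ((Finset.mem_range.mp hk).trans hn)]] at h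
    exact mul_left_cancel₀ (by rw [Nat.choose_succ_self_right]; positivity) (add_left_cancel h)

/- The hypothesis is the recurrence determining the Bernoulli polynomials, in terms of
`c k = -B_k(x) / k!`. -/
theorem bilateralZeta_eq_of_forall_sum_eq {x : ℚ} (hx : (x : ℝ) ∈ Set.Ico 0 1) {N : ℕ} {c : ℕ → ℚ}
    (hc : ∀ n < N, ∑ k ∈ Finset.range (n + 1), (n + 1).descFactorial k * c k = -(n + 1) * x ^ n)
    {k : ℕ} (hk : k < N) :
    bilateralZeta ((x : ℝ) : UnitAddCircle) k = (2 * π * Complex.I) ^ k * c k := by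
  have hb : bernoulliFun k x = -(k.factorial * c k) := by
    refine bernoulliFun_eq_of_forall_sum_eq (b := fun k => -(k.factorial * c k)) (fun n hn => ?_) hk
    have h := congrArg (fun y : ℚ => -(y : ℝ)) (hc n hn)
    simp only [Nat.descFactorial_eq_factorial_mul_choose] at h
    push_cast at h
    rw [← Finset.sum_neg_distrib] at h
    refine (Finset.sum_congr rfl fun k _ => ?_).trans (h.trans ?_) <;> ring
  rw [bilateralZeta_coe hx, hb]
  push_cast
  field_simp [Nat.factorial_ne_zero]

theorem bilateralZeta_coe_zero {k : ℕ} (hk : k < 13) :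
    bilateralZeta ((0 : ℝ) : UnitAddCircle) k = (2 * π * Complex.I) ^ k *
      (([-1, 1 / 2, -1 / 12, 0, 1 / 720, 0, -1 / 30240, 0, 1 / 1209600, 0, -1 / 47900160, 0,
        691 / 1307674368000].getD k 0 : ℚ) : ℂ) := by
  rw [← Rat.cast_zero]
  refine bilateralZeta_eq_of_forall_sum_eq (x := 0) (c := fun k => List.getD _ k 0) ?_ ?_ hk
  · norm_num
  · decide +kernel

theorem bilateralZeta_coe_one_div_four {k : ℕ} (hk : k < 13) :
    bilateralZeta ((1 / 4 : ℝ) : UnitAddCircle) k = (2 * π * Complex.I) ^ k *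
      (([-1, 1 / 4, 1 / 96, -1 / 128, -7 / 92160, 5 / 24576, 31 / 61931520, -61 / 11796480,
        -127 / 39636172800, 277 / 2113929216, 73 / 3587639869440, -50521 / 15220290355200,
        -1414477 / 10969567664799744000].getD k 0 : ℚ) : ℂ) := by
  rw [show (1 / 4 : ℝ) = (1 / 4 : ℚ) by norm_num]
  refine bilateralZeta_eq_of_forall_sum_eq (x := 1 / 4) (c := fun k => List.getD _ k 0) ?_ ?_ hk
  · norm_num
  · decide +kernel

theorem bilateralZeta_coe_one_div_two {k : ℕ} (hk : k < 13) :
    bilateralZeta ((1 / 2 : ℝ) : UnitAddCircle) k = (2 * π * Complex.I) ^ k *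
      (([-1, 0, 1 / 24, 0, -7 / 5760, 0, 31 / 967680, 0, -127 / 154828800, 0, 73 / 3503554560, 0,
        -1414477 / 2678117105664000].getD k 0 : ℚ) : ℂ) := by
  rw [show (1 / 2 : ℝ) = (1 / 2 : ℚ) by norm_num]
  refine bilateralZeta_eq_of_forall_sum_eq (x := 1 / 2) (c := fun k => List.getD _ k 0) ?_ ?_ hk
  · norm_num
  · decide +kernel

theorem two_mul_pi_mul_I_pow_twelve : (2 * π * Complex.I) ^ 12 = 4096 * (π : ℂ) ^ 12 := by
  rw [mul_pow, mul_pow, show 12 = 4 * 3 from rfl, pow_mul Complex.I, Complex.I_pow_four]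
  norm_num

theorem typeASeries_three_coe_zero :
    typeASeries 3 ((0 : ℝ) : UnitAddCircle) = 46 / 212837625 * π ^ 12 := by
  rw [typeASeries_three (by simp)]
  simp only [mordellTornheim_eq, Finset.sum_range_succ, Finset.sum_range_zero, ← AddCircle.coe_add,
    add_zero, Nat.reduceLeDiff, Nat.reduceAdd, Nat.reduceSub, Nat.reduceLT, bilateralZeta_coe_zero]
  norm_num [Nat.choose]
  linear_combination (46 / 212837625 / 4096) * two_mul_pi_mul_I_pow_twelve

theorem typeASeries_three_coe_one_div_two :
    typeASeries 3 ((1 / 2 : ℝ) : UnitAddCircle) = 4523 / 27243216000 * π ^ 12 := by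
  have hfour : (4 : ℤ) • ((1 / 2 : ℝ) : UnitAddCircle) = 0 := by
    rw [← AddCircle.coe_zsmul, AddCircle.coe_eq_zero_iff]
    exact ⟨2, by norm_num⟩
  have hadd : ((1 / 2 : ℝ) : UnitAddCircle) + ((1 / 2 : ℝ) : UnitAddCircle) = (0 : ℝ) := by
    rw [← AddCircle.coe_add, add_halves, AddCircle.coe_period, AddCircle.coe_zero]
  rw [typeASeries_three hfour]
  simp only [mordellTornheim_eq, Finset.sum_range_succ, Finset.sum_range_zero, hadd,
    Nat.reduceLeDiff, Nat.reduceAdd, Nat.reduceSub, Nat.reduceLT, bilateralZeta_coe_zero,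
    bilateralZeta_coe_one_div_two]
  norm_num [Nat.choose]
  linear_combination (4523 / 27243216000 / 4096) * two_mul_pi_mul_I_pow_twelve

theorem typeASeries_three_coe_one_div_four :
    typeASeries 3 ((1 / 4 : ℝ) : UnitAddCircle) = -19329337 / 111588212736000 * π ^ 12 := by
  have hfour : (4 : ℤ) • ((1 / 4 : ℝ) : UnitAddCircle) = 0 := by
    rw [← AddCircle.coe_zsmul, AddCircle.coe_eq_zero_iff]
    exact ⟨1, by norm_num⟩
  have hadd : ((1 / 4 : ℝ) : UnitAddCircle) + ((1 / 4 : ℝ) : UnitAddCircle) = (1 / 2 : ℝ) := by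
    rw [← AddCircle.coe_add]
    norm_num
  rw [typeASeries_three hfour]
  simp only [mordellTornheim_eq, Finset.sum_range_succ, Finset.sum_range_zero, hadd,
    Nat.reduceLeDiff, Nat.reduceAdd, Nat.reduceSub, Nat.reduceLT, bilateralZeta_coe_one_div_four,
    bilateralZeta_coe_one_div_two]
  norm_num [Nat.choose]
  linear_combination (-19329337 / 111588212736000 / 4096) * two_mul_pi_mul_I_pow_twelve

end Values

section Conclusion

theorem tsum_ite_dvd_vandermondeWeight {r : ℕ}
    (hr : Summable fun u : Fin r → ℤ => ‖vandermondeWeight (Matrix.vecCons 0 u)‖) (a : ℤ) :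
    ∑' u : Fin r → ℤ,
        (if ((r + 1 : ℕ) : ℤ) ∣ ∑ i, u i - a then vandermondeWeight (Matrix.vecCons 0 u) else 0) =
      (r + 1).factorial • ∑' u : StrictMonoTuple ℤ r,
        if ((r + 1 : ℕ) : ℤ) ∣ ∑ i, u.1 i - a then vandermondeWeight (Matrix.vecCons 0 u.1)
        else 0 := by
  set F : (Fin (r + 1) → ℤ) → ℂ := fun v =>
    if ((r + 1 : ℕ) : ℤ) ∣ ∑ i, v i - a then vandermondeWeight v else 0
  have hF (u : Fin r → ℤ) : (if ((r + 1 : ℕ) : ℤ) ∣ ∑ i, u i - a then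
      vandermondeWeight (Matrix.vecCons 0 u) else 0) = F (Matrix.vecCons 0 u) := by
    simp only [F, Fin.sum_univ_succ, Matrix.cons_val_zero, Matrix.cons_val_succ, zero_add]
  simp only [hF]
  refine tsum_vecCons_zero_eq_factorial_smul (F := F) (fun v σ => ?_) (fun v c => ?_)
    (fun v hv => ?_) (.of_norm_bounded hr fun u => ?_)
  · simp only [F, Function.comp_apply, Equiv.sum_comp σ v, vandermondeWeight_comp_perm]
  · have hsum : ∑ i, (v i + c) - a = ((r + 1 : ℕ) : ℤ) * c + (∑ i, v i - a) := by
      rw [Finset.sum_add_distrib, Fin.sum_const, nsmul_eq_mul]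
      ring
    simp only [F, hsum, dvd_mul_right, Int.dvd_add_right, vandermondeWeight_add_const]
  · simp only [F, vandermondeWeight_eq_zero hv, ite_self]
  · rw [← hF]
    split_ifs
    · exact le_rfl
    · rw [norm_zero]
      exact norm_nonneg _

theorem vandermondeWeight_cons_gapEquiv (t : ℕ × ℕ × ℕ) :
    vandermondeWeight (Matrix.vecCons 0 (gapEquiv t).1) =
      ((1 / (((t.1 + 1 : ℕ) : ℝ) ^ 2 * ((t.2.1 + 1 : ℕ) : ℝ) ^ 2 * ((t.2.2 + 1 : ℕ) : ℝ) ^ 2 *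
        ((t.1 + 1 + (t.2.1 + 1) : ℕ) : ℝ) ^ 2 * ((t.2.1 + 1 + (t.2.2 + 1) : ℕ) : ℝ) ^ 2 *
        ((t.1 + 1 + (t.2.1 + 1) + (t.2.2 + 1) : ℕ) : ℝ) ^ 2) : ℝ) : ℂ) := by
  rw [gapEquiv, Equiv.coe_fn_mk, vandermondeWeight_zero_cons_three]
  push_cast
  simp only [one_div, mul_inv, ← inv_pow]
  rw [← neg_sub, inv_neg, neg_sq]
  ring_nf

theorem four_dvd_sum_gapEquiv_sub_two_iff (t : ℕ × ℕ × ℕ) :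
    4 ∣ ∑ i, (gapEquiv t).1 i - 2 ↔
      ((t.1 + 1) + 2 * (t.2.1 + 1) + 3 * (t.2.2 + 1)) % 4 = 2 := by
  simp only [gapEquiv, Equiv.coe_fn_mk, Fin.sum_univ_three, Matrix.cons_val]
  lia

end Conclusion

/-- `ζ₃((2,2,2,2,2,2), 0; PU(4)) = 1103 π¹² / 145332633600`
(Equation (2.17) of Komori–Matsumoto–Tsumura). -/
theorem PU4_value_two :
    (∑' t : ℕ × ℕ × ℕ,
        if ((t.1 + 1) + 2 * (t.2.1 + 1) + 3 * (t.2.2 + 1)) % 4 = 2 then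
          (1 : ℝ) /
            (((t.1 + 1 : ℕ) : ℝ) ^ 2 * ((t.2.1 + 1 : ℕ) : ℝ) ^ 2 *
              ((t.2.2 + 1 : ℕ) : ℝ) ^ 2 * ((t.1 + 1 + (t.2.1 + 1) : ℕ) : ℝ) ^ 2 *
              ((t.2.1 + 1 + (t.2.2 + 1) : ℕ) : ℝ) ^ 2 *
              ((t.1 + 1 + (t.2.1 + 1) + (t.2.2 + 1) : ℕ) : ℝ) ^ 2)
        else 0) = 1103 * π ^ 12 / 145332633600 := by
  have hsymm := tsum_ite_dvd_vandermondeWeight summable_norm_vandermondeWeight_cons_three 2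
  simp only [Nat.reduceAdd, Nat.cast_ofNat] at hsymm
  rw [tsum_ite_four_dvd_sub_two, typeASeries_three_coe_zero, typeASeries_three_coe_one_div_four,
    typeASeries_three_coe_one_div_two, ← gapEquiv.tsum_eq] at hsymm
  simp only [four_dvd_sum_gapEquiv_sub_two_iff, vandermondeWeight_cons_gapEquiv,
    ← Complex.ofReal_zero, ← apply_ite Complex.ofReal, ← Complex.ofReal_tsum] at hsymm
  rw [nsmul_eq_mul, show Nat.factorial 4 = 24 from rfl] at hsymm
  apply Complex.ofReal_injective
  simp only [Complex.ofReal_div, Complex.ofReal_mul, Complex.ofReal_pow, Complex.ofReal_ofNat]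
  linear_combination -hsymm / 24
end

section
/- Σ over integers l, m, n ≥ 1 with l ≡ n (mod 2) of 1 / (l² m² n² (l+m)² (m+n)² (l+m+n)²) = 10411·π¹² / 1307674368000. -/
open Real

/-!
The triples `(l, m, n)` with `l ≡ n (mod 2)` correspond to the integer points `x > y > |z|` through
`l = y - z`, `m = x - y`, `n = y + z`, and the summand becomes the square of
`1 / ((x² - y²) (y² - z²) (x² - z²))`. Extended by `0` to the points where two of `|x|, |y|, |z|`
agree, this square is invariant under signed permutations of the coordinates. The 24 of them with an
even number of sign changes act simply transitively on the chambers, so the sum over `ℤ³` is 24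
times the value sought.

Partial fractions in `y²` split the square into two terms that are exchanged by `x ↔ z`. For fixed
`x`, the sums over `y` and `z` of such a term decouple into products of sums of `(x² - y²)⁻ᵏ` over
`y`. By partial fractions once more, now in `x - y` and `x + y`, these are for `x ≠ 0` polynomials
in `(2 * x)⁻¹` with even zeta values as coefficients: the odd powers cancel, the first power because
its sum telescopes. The remaining sum over `x` gives even zeta values again.
-/

namespace SO6

section PartialFractions

open Finset

section Semiring

variable {R : Type*} [CommSemiring R]

/-- The part with poles at `p = 0` of the partial fraction expansion of
`p⁻¹ ^ (a + 1) * q⁻¹ ^ (b + 1)` for constant `p + q`, in terms of `w = (p + q)⁻¹` and `u = p⁻¹`. -/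
def polarPart (w u : R) (a b : ℕ) : R :=
  ∑ p ∈ antidiagonal a, ((p.2 + b).choose b : R) * w ^ (p.2 + b + 1) * u ^ (p.1 + 1)

lemma polarPart_zero_left (w u : R) (b : ℕ) : polarPart w u 0 b = w ^ (b + 1) * u := by
  simp [polarPart]

lemma polarPart_succ_zero (w u : R) (a : ℕ) :
    polarPart w u (a + 1) 0 = w * (u ^ (a + 2) + polarPart w u a 0) := by
  simp only [polarPart, Nat.sum_antidiagonal_succ', mul_add, mul_sum, add_zero, zero_add,
    Nat.choose_zero_right, Nat.cast_one, one_mul, pow_one]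
  congr 1
  exact sum_congr rfl fun p _ => by ring

lemma polarPart_succ_succ (w u : R) (a b : ℕ) :
    polarPart w u (a + 1) (b + 1) = w * (polarPart w u (a + 1) b + polarPart w u a (b + 1)) := by
  have pascal (j : ℕ) :
      (j + 1 + (b + 1)).choose (b + 1) = (j + 1 + b).choose b + (j + (b + 1)).choose (b + 1) := by
    rw [← add_assoc, Nat.choose_succ_succ, add_right_comm j, add_assoc j]
  simp only [polarPart, Nat.sum_antidiagonal_succ', pascal, zero_add, Nat.choose_self, Nat.cast_add]
  rw [add_assoc (_ * _ * _), ← sum_add_distrib, mul_add, mul_sum]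
  congr 1
  · ring
  · exact sum_congr rfl fun p _ => by ring

lemma polarPart_self (w : R) (a b : ℕ) :
    polarPart w w a b = ((a + b + 1).choose (b + 1) : R) * w ^ (a + b + 2) := by
  have hw : ∀ p ∈ antidiagonal a, ((p.2 + b).choose b : R) * w ^ (p.2 + b + 1) * w ^ (p.1 + 1) =
      ((b + p.2).choose b : R) * w ^ (a + b + 2) := fun p hp => by
    rw [← mem_antidiagonal.1 hp, add_comm b]; ring
  rw [polarPart, sum_congr rfl hw, ← sum_mul, ← Nat.cast_sum,
    sum_antidiagonal_choose_add, add_comm b]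

theorem pow_succ_mul_pow_succ_of_mul_eq {u v w : R} (h : u * v = w * (u + v)) :
    ∀ a b : ℕ, u ^ (a + 1) * v ^ (b + 1) = polarPart w u a b + polarPart w v b a
  | 0, 0 => by simp [polarPart_zero_left, h, mul_add]
  | 0, b + 1 => by
    have ih := pow_succ_mul_pow_succ_of_mul_eq h 0 b
    rw [polarPart_zero_left] at ih ⊢
    rw [polarPart_succ_zero]
    calc u ^ (0 + 1) * v ^ (b + 1 + 1) = u * v * v ^ (b + 1) := by ring
      _ = w * (u ^ (0 + 1) * v ^ (b + 1) + v ^ (b + 2)) := by rw [h]; ring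
      _ = _ := by rw [ih]; ring
  | a + 1, 0 => by
    have ih := pow_succ_mul_pow_succ_of_mul_eq h a 0
    rw [polarPart_zero_left] at ih ⊢
    rw [polarPart_succ_zero]
    calc u ^ (a + 1 + 1) * v ^ (0 + 1) = u ^ (a + 1) * (u * v) := by ring
      _ = w * (u ^ (a + 2) + u ^ (a + 1) * v ^ (0 + 1)) := by rw [h]; ring
      _ = _ := by rw [ih]; ring
  | a + 1, b + 1 => by
    rw [polarPart_succ_succ, polarPart_succ_succ]
    calc u ^ (a + 1 + 1) * v ^ (b + 1 + 1) = u ^ (a + 1) * v ^ (b + 1) * (u * v) := by ring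
      _ = w * (u ^ (a + 1 + 1) * v ^ (b + 1) + u ^ (a + 1) * v ^ (b + 1 + 1)) := by rw [h]; ring
      _ = _ := by
        rw [pow_succ_mul_pow_succ_of_mul_eq h (a + 1) b,
          pow_succ_mul_pow_succ_of_mul_eq h a (b + 1)]
        ring

end Semiring

variable {K : Type*} [Field K] [DecidableEq K]

theorem inv_mul_inv_pow_succ {p q : K} (h : p + q ≠ 0) (k : ℕ) :
    (p⁻¹ * q⁻¹) ^ (k + 1) = polarPart (p + q)⁻¹ p⁻¹ k k + polarPart (p + q)⁻¹ q⁻¹ k k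
      - ((2 * k + 1).choose (k + 1) : K) * (p + q)⁻¹ ^ (2 * k + 2) *
        ((if p = 0 then 1 else 0) + if q = 0 then 1 else 0) := by
  have polarPart_zero (w : K) : polarPart w 0 k k = 0 := by simp [polarPart]
  rcases eq_or_ne p 0 with rfl | hp
  · have hq : q ≠ 0 := by simpa using h
    simp [hq, polarPart_zero, polarPart_self, two_mul]
  rcases eq_or_ne q 0 with rfl | hq
  · simp [hp, polarPart_zero, polarPart_self, two_mul]
  have hpq : p⁻¹ * q⁻¹ = (p + q)⁻¹ * (p⁻¹ + q⁻¹) := by field_simp; ring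
  rw [mul_pow, pow_succ_mul_pow_succ_of_mul_eq hpq]
  simp [hp, hq]

/-- The part with poles at `b = a` of the partial fraction expansion in `b` of the square of
`(a - b)⁻¹ * (b - c)⁻¹ * (a - c)⁻¹`. The indicator makes up for the junk value `0⁻¹ = 0`. -/
noncomputable def splitTerm (a b c : K) : K :=
  (a - c)⁻¹ ^ 4 * (a - b)⁻¹ ^ 2 + 2 * ((a - c)⁻¹ ^ 5 * (a - b)⁻¹) -
    3 * ((a - c)⁻¹ ^ 6 * if a = b then 1 else 0)

theorem splitTerm_add_splitTerm (a b c : K) :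
    ((a - b)⁻¹ * (b - c)⁻¹ * (a - c)⁻¹) ^ 2 = splitTerm a b c + splitTerm c b a := by
  rcases eq_or_ne a c with rfl | hac
  · simp [splitTerm]
  have h : a - b + (b - c) ≠ 0 := by rwa [sub_add_sub_cancel, sub_ne_zero]
  have split := inv_mul_inv_pow_succ h 1
  simp only [sub_eq_zero, sub_add_sub_cancel] at split
  rw [mul_pow, split, splitTerm, splitTerm, ← neg_sub a c, ← neg_sub b c, inv_neg, inv_neg]
  simp only [eq_comm (a := c)]
  generalize (a - c)⁻¹ = w, (a - b)⁻¹ = u, (b - c)⁻¹ = v, (if a = b then (1 : K) else 0) = i,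
    (if b = c then (1 : K) else 0) = j
  simp only [polarPart, Nat.sum_antidiagonal_succ, Nat.antidiagonal_zero, sum_singleton]
  norm_num [Nat.choose, mul_sub, mul_add]
  ring

end PartialFractions

section Telescoping

open Filter Topology

variable {G : Type*} [AddCommGroup G] [TopologicalSpace G] [IsTopologicalAddGroup G] [T2Space G]
  {f : ℤ → G}

theorem hasSum_sub_add_one (hs : Summable fun n => f n - f (n + 1))
    (hf : Tendsto f cofinite (𝓝 0)) : HasSum (fun n => f n - f (n + 1)) 0 := by
  have partial_sums : Tendsto (fun N : ℕ => ∑ n ∈ Finset.Ico (-(N : ℤ)) N, (f n - f (n + 1)))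
      atTop (𝓝 (0 - 0)) := by
    simp only [Finset.sum_Ico_int_sub, ← Nat.cofinite_eq_atTop]
    have cast_inj := Nat.cast_injective (R := ℤ)
    exact (hf.comp (neg_injective.comp cast_inj).tendsto_cofinite).sub
      (hf.comp cast_inj.tendsto_cofinite)
  rw [sub_zero, ← SummationFilter.hasSum_symmetricIco_int_iff] at partial_sums
  have symmetric_sum : HasSum (fun n => f n - f (n + 1)) _ (.symmetricIco ℤ) :=
    Tendsto.mono_left hs.hasSum SummationFilter.LeAtTop.le_atTop
  simpa only [symmetric_sum.unique partial_sums] using hs.hasSum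

theorem hasSum_sub_comp_add (hs : Summable fun n => f n - f (n + 1))
    (hf : Tendsto f cofinite (𝓝 0)) (m : ℤ) : HasSum (fun n => f n - f (n + m)) 0 := by
  have shift (k : ℤ) : HasSum (fun n => f (n + k) - f (n + k + 1)) 0 :=
    ((Equiv.addRight k).hasSum_iff (f := fun n => f n - f (n + 1))).2 (hasSum_sub_add_one hs hf)
  induction m with
  | zero => simp
  | succ k ih => simpa [add_assoc] using ih.add (shift k)
  | pred k ih => simpa [sub_eq_add_neg, add_assoc] using ih.sub (shift (-k - 1))

end Telescoping

section Zeta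

open Filter Topology

/-- The sum of `n⁻ᵏ` over the integers `n ≠ 0`. It vanishes for odd `k`; for `k = 1` this is the
principal value, as the series does not converge absolutely. -/
noncomputable def intZeta (k : ℕ) : ℝ :=
  (1 + (-1) ^ k) * ∑' n : ℕ, 1 / (n : ℝ) ^ k

lemma intZeta_of_odd {k : ℕ} (hk : Odd k) : intZeta k = 0 := by
  simp [intZeta, hk.neg_one_pow]

lemma intZeta_two_mul {k : ℕ} (hk : k ≠ 0) :
    intZeta (2 * k) =
      (-1) ^ (k + 1) * 2 ^ (2 * k) * π ^ (2 * k) * bernoulli (2 * k) / (2 * k).factorial := by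
  obtain ⟨k, rfl⟩ := Nat.exists_eq_succ_of_ne_zero hk
  rw [intZeta, (hasSum_zeta_nat hk).tsum_eq, (even_two_mul _).neg_one_pow,
    show 2 * k.succ = 2 * k + 1 + 1 by omega, Nat.add_sub_cancel]
  ring

lemma bernoulli_four : bernoulli 4 = -1 / 30 := by
  have h := sum_bernoulli 5
  norm_num [Finset.sum_range_succ, Nat.choose, bernoulli_eq_zero_of_odd, Nat.odd_iff,
    bernoulli_two] at h
  linarith

lemma bernoulli_six : bernoulli 6 = 1 / 42 := by
  have h := sum_bernoulli 7
  norm_num [Finset.sum_range_succ, Nat.choose, bernoulli_eq_zero_of_odd, Nat.odd_iff,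
    bernoulli_two, bernoulli_four] at h
  linarith

lemma bernoulli_eight : bernoulli 8 = -1 / 30 := by
  have h := sum_bernoulli 9
  norm_num [Finset.sum_range_succ, Nat.choose, bernoulli_eq_zero_of_odd, Nat.odd_iff,
    bernoulli_two, bernoulli_four, bernoulli_six] at h
  linarith

lemma bernoulli_ten : bernoulli 10 = 5 / 66 := by
  have h := sum_bernoulli 11
  norm_num [Finset.sum_range_succ, Nat.choose, bernoulli_eq_zero_of_odd, Nat.odd_iff,
    bernoulli_two, bernoulli_four, bernoulli_six, bernoulli_eight] at h
  linarith

lemma bernoulli_twelve : bernoulli 12 = -691 / 2730 := by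
  have h := sum_bernoulli 13
  norm_num [Finset.sum_range_succ, Nat.choose, bernoulli_eq_zero_of_odd, Nat.odd_iff,
    bernoulli_two, bernoulli_four, bernoulli_six, bernoulli_eight, bernoulli_ten] at h
  linarith

lemma intZeta_two : intZeta 2 = π ^ 2 / 3 := by
  have h := intZeta_two_mul one_ne_zero
  rw [mul_one, bernoulli_two] at h
  norm_num [h, Nat.factorial]
  ring

lemma intZeta_four : intZeta 4 = π ^ 4 / 45 := by
  have h := intZeta_two_mul (by decide : 2 ≠ 0)
  norm_num [bernoulli_four, Nat.factorial] at h
  linarith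

lemma intZeta_six : intZeta 6 = 2 * π ^ 6 / 945 := by
  have h := intZeta_two_mul (by decide : 3 ≠ 0)
  norm_num [bernoulli_six, Nat.factorial] at h
  linarith

lemma intZeta_eight : intZeta 8 = π ^ 8 / 4725 := by
  have h := intZeta_two_mul (by decide : 4 ≠ 0)
  norm_num [bernoulli_eight, Nat.factorial] at h
  linarith

lemma intZeta_ten : intZeta 10 = 2 * π ^ 10 / 93555 := by
  have h := intZeta_two_mul (by decide : 5 ≠ 0)
  norm_num [bernoulli_ten, Nat.factorial] at h
  linarith

lemma intZeta_twelve : intZeta 12 = 1382 * π ^ 12 / 638512875 := by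
  have h := intZeta_two_mul (by decide : 6 ≠ 0)
  norm_num [bernoulli_twelve, Nat.factorial] at h
  linarith

theorem hasSum_inv_intCast_pow {k : ℕ} (hk : 1 < k) :
    HasSum (fun n : ℤ => (n : ℝ)⁻¹ ^ k) (intZeta k) := by
  have hnat : HasSum (fun n : ℕ => ((n : ℤ) : ℝ)⁻¹ ^ k) (∑' n : ℕ, 1 / (n : ℝ) ^ k) := by
    simpa using (Real.summable_one_div_nat_pow.2 hk).hasSum
  have hneg : HasSum (fun n : ℕ => ((-(n : ℤ) : ℤ) : ℝ)⁻¹ ^ k)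
      ((-1) ^ k * ∑' n : ℕ, 1 / (n : ℝ) ^ k) :=
    (hnat.mul_left ((-1) ^ k)).congr_fun fun n => by
      rw [← mul_pow, neg_one_mul, Int.cast_neg, inv_neg]
  have h := HasSum.of_nat_of_neg (f := fun n : ℤ => (n : ℝ)⁻¹ ^ k) hnat hneg
  simpa [intZeta, add_mul, (zero_lt_one.trans hk).ne'] using h

lemma abs_mul_le_sq_add_sq (a b : ℝ) : |a * b| ≤ a ^ 2 + b ^ 2 := by
  rw [abs_le]
  constructor <;> nlinarith [sq_nonneg (a + b), sq_nonneg (a - b)]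

lemma summable_inv_intCast_sub_inv_intCast_add_one :
    Summable fun n : ℤ => (n : ℝ)⁻¹ - ((n + 1 : ℤ) : ℝ)⁻¹ := by
  have hsq := (hasSum_inv_intCast_pow one_lt_two).summable
  refine (hsq.add ((Equiv.addRight (1 : ℤ)).summable_iff.2 hsq)).of_norm_bounded fun n => ?_
  rw [Real.norm_eq_abs, Function.comp_apply, Equiv.coe_addRight]
  rcases eq_or_ne n 0 with rfl | h0
  · simp
  rcases eq_or_ne n (-1) with rfl | h1
  · simp
  have h0' : (n : ℝ) ≠ 0 := mod_cast h0
  have h1' : ((n + 1 : ℤ) : ℝ) ≠ 0 := mod_cast fun h => h1 (eq_neg_of_add_eq_zero_left h)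
  have : (n : ℝ)⁻¹ - ((n + 1 : ℤ) : ℝ)⁻¹ = (n : ℝ)⁻¹ * ((n + 1 : ℤ) : ℝ)⁻¹ := by
    rw [inv_sub_inv h0' h1']
    push_cast
    field_simp
    ring
  exact this ▸ abs_mul_le_sq_add_sq _ _

lemma tendsto_inv_intCast_cofinite : Tendsto (fun n : ℤ => (n : ℝ)⁻¹) cofinite (𝓝 0) :=
  tendsto_inv₀_cobounded.comp (Metric.cobounded_eq_cocompact (α := ℝ) ▸ Int.tendsto_coe_cofinite)

theorem hasSum_inv_sub_pow_add_inv_add_pow {k : ℕ} (hk : k ≠ 0) (x : ℤ) :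
    HasSum (fun y : ℤ => ((x : ℝ) - y)⁻¹ ^ k + ((x : ℝ) + y)⁻¹ ^ k) (2 * intZeta k) := by
  rcases (Nat.one_le_iff_ne_zero.2 hk).eq_or_lt with rfl | hk
  · have h := hasSum_sub_comp_add summable_inv_intCast_sub_inv_intCast_add_one
      tendsto_inv_intCast_cofinite (2 * x)
    rw [intZeta_of_odd odd_one, mul_zero, ← neg_zero]
    refine ((Equiv.subRight x).hasSum_iff.2 h).neg.congr_fun fun y => ?_
    have h1 : (x : ℝ) - y = -(y - x) := (neg_sub _ _).symm
    have h2 : (y : ℝ) - x + 2 * x = x + y := by ring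
    simp only [Function.comp_apply, Equiv.subRight_apply, Int.cast_add, Int.cast_sub, Int.cast_mul,
      Int.cast_ofNat, pow_one, h1, h2, inv_neg]
    ring
  · have h := hasSum_inv_intCast_pow hk
    have hsub := (Equiv.subLeft x).hasSum_iff.2 h
    have hadd := (Equiv.addLeft x).hasSum_iff.2 h
    rw [two_mul]
    simpa [Function.comp_def] using hsub.add hadd

end Zeta

section Rows

open Finset

/-- The reciprocal of `x² - y²`, with the junk value `0` on the walls `x = ±y`; up to sign it is the
factor that the pair of roots `e₁ ± e₂` contributes to the summand. -/
noncomputable def invSubSq (x y : ℤ) : ℝ := ((x : ℝ) ^ 2 - (y : ℝ) ^ 2)⁻¹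

/-- The indicator function of the walls `x = ±y`, in the form in which it occurs in `splitTerm` at
squares of integers. -/
noncomputable def wallIndicator (x y : ℤ) : ℝ := if (x : ℝ) ^ 2 = (y : ℝ) ^ 2 then 1 else 0

lemma invSubSq_eq_inv_mul_inv (x y : ℤ) :
    invSubSq x y = ((x : ℝ) - y)⁻¹ * ((x : ℝ) + y)⁻¹ := by
  rw [invSubSq, sq_sub_sq, mul_inv_rev]

lemma hasSum_ite_sub_eq_zero_add_ite_add_eq_zero (x : ℤ) :
    HasSum (fun y : ℤ => (if (x : ℝ) - y = 0 then (1 : ℝ) else 0) +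
      if (x : ℝ) + y = 0 then 1 else 0) 2 := by
  have h := (hasSum_ite_eq x (1 : ℝ)).add (hasSum_ite_eq (-x) (1 : ℝ))
  rw [one_add_one_eq_two] at h
  refine h.congr_fun fun y => ?_
  have hsub : (x : ℝ) - y = 0 ↔ y = x := by rw [sub_eq_zero, eq_comm]; norm_cast
  have hadd : (x : ℝ) + y = 0 ↔ y = -x := by rw [add_comm, add_eq_zero_iff_eq_neg]; norm_cast
  simp only [hsub, hadd]

lemma wallIndicator_eq_ite (x y : ℤ) :
    wallIndicator x y = if (x : ℝ) - y = 0 ∨ (x : ℝ) + y = 0 then 1 else 0 := by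
  simp only [wallIndicator, ← sub_eq_zero (a := (x : ℝ) ^ 2), sq_sub_sq, mul_eq_zero, or_comm]

lemma wallIndicator_zero_left (y : ℤ) : wallIndicator 0 y = if y = 0 then 1 else 0 := by
  simp [wallIndicator, eq_comm (a := (0 : ℝ))]

lemma wallIndicator_of_ne_zero {x : ℤ} (hx : x ≠ 0) (y : ℤ) :
    wallIndicator x y =
      (if (x : ℝ) - y = 0 then 1 else 0) + if (x : ℝ) + y = 0 then 1 else 0 := by
  have hx' : (x : ℝ) ≠ 0 := mod_cast hx
  have hne : ¬ ((x : ℝ) - y = 0 ∧ (x : ℝ) + y = 0) := fun h => hx' (by linarith [h.1, h.2])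
  rw [wallIndicator_eq_ite]
  split_ifs <;> simp_all

lemma hasSum_wallIndicator {x : ℤ} (hx : x ≠ 0) : HasSum (wallIndicator x) 2 :=
  (hasSum_ite_sub_eq_zero_add_ite_add_eq_zero x).congr_fun (wallIndicator_of_ne_zero hx)

lemma hasSum_wallIndicator_zero : HasSum (wallIndicator 0) 1 :=
  (hasSum_ite_eq 0 1).congr_fun wallIndicator_zero_left

lemma hasSum_polarPart (w : ℝ) (a b : ℕ) (x : ℤ) :
    HasSum (fun y : ℤ => polarPart w ((x : ℝ) - y)⁻¹ a b + polarPart w ((x : ℝ) + y)⁻¹ a b)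
      (∑ p ∈ antidiagonal a, ((p.2 + b).choose b : ℝ) * w ^ (p.2 + b + 1) *
        (2 * intZeta (p.1 + 1))) := by
  have h := hasSum_sum (s := antidiagonal a) fun p _ =>
    (hasSum_inv_sub_pow_add_inv_add_pow p.1.succ_ne_zero x).mul_left
      (((p.2 + b).choose b : ℝ) * w ^ (p.2 + b + 1))
  refine h.congr_fun fun y => ?_
  simp only [polarPart, ← sum_add_distrib, mul_add]

/-- The value of `∑ y, invSubSq x y ^ (k + 1)` as a polynomial in `w = (2 * x)⁻¹`, for `x ≠ 0`. -/
noncomputable def invSubSqPowSum (k : ℕ) (w : ℝ) : ℝ :=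
  ∑ p ∈ antidiagonal k, ((p.2 + k).choose k : ℝ) * w ^ (p.2 + k + 1) * (2 * intZeta (p.1 + 1)) -
    ((2 * k + 1).choose (k + 1) : ℝ) * w ^ (2 * k + 2) * 2

theorem hasSum_invSubSq_pow_succ {x : ℤ} (hx : x ≠ 0) (k : ℕ) :
    HasSum (fun y => invSubSq x y ^ (k + 1)) (invSubSqPowSum k (2 * x : ℝ)⁻¹) := by
  have h := (hasSum_polarPart (2 * x : ℝ)⁻¹ k k x).sub
    ((hasSum_ite_sub_eq_zero_add_ite_add_eq_zero x).mul_left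
      (((2 * k + 1).choose (k + 1) : ℝ) * (2 * x : ℝ)⁻¹ ^ (2 * k + 2)))
  refine h.congr_fun fun y => ?_
  have hsum : (x : ℝ) - y + (x + y) = 2 * x := by ring
  have hne : (x : ℝ) - y + (x + y) ≠ 0 := hsum ▸ mul_ne_zero two_ne_zero (mod_cast hx)
  rw [invSubSq_eq_inv_mul_inv, inv_mul_inv_pow_succ hne, hsum]

lemma invSubSqPowSum_zero (w : ℝ) :
    invSubSqPowSum 0 w = -2 * w ^ 2 := by
  norm_num [invSubSqPowSum, Nat.sum_antidiagonal_succ, Nat.choose, intZeta_of_odd, Nat.odd_iff]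
  ring

lemma invSubSqPowSum_one (w : ℝ) :
    invSubSqPowSum 1 w = 2 * π ^ 2 / 3 * w ^ 2 - 6 * w ^ 4 := by
  norm_num [invSubSqPowSum, Nat.sum_antidiagonal_succ, Nat.choose, intZeta_of_odd, Nat.odd_iff,
    intZeta_two]
  ring

lemma invSubSqPowSum_three (w : ℝ) :
    invSubSqPowSum 3 w = 2 * π ^ 4 / 45 * w ^ 4 + 20 * π ^ 2 / 3 * w ^ 6 - 70 * w ^ 8 := by
  norm_num [invSubSqPowSum, Nat.sum_antidiagonal_succ, Nat.choose, intZeta_of_odd, Nat.odd_iff,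
    intZeta_two, intZeta_four]
  ring

lemma invSubSqPowSum_four (w : ℝ) :
    invSubSqPowSum 4 w = 2 * π ^ 4 / 9 * w ^ 6 + 70 * π ^ 2 / 3 * w ^ 8 - 252 * w ^ 10 := by
  norm_num [invSubSqPowSum, Nat.sum_antidiagonal_succ, Nat.choose, intZeta_of_odd, Nat.odd_iff,
    intZeta_two, intZeta_four]
  ring

lemma invSubSqPowSum_five (w : ℝ) :
    invSubSqPowSum 5 w = 4 * π ^ 6 / 945 * w ^ 6 + 14 * π ^ 4 / 15 * w ^ 8 + 84 * π ^ 2 * w ^ 10 -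
      924 * w ^ 12 := by
  norm_num [invSubSqPowSum, Nat.sum_antidiagonal_succ, Nat.choose, intZeta_of_odd, Nat.odd_iff,
    intZeta_two, intZeta_four, intZeta_six]
  ring

theorem hasSum_invSubSq_zero_pow {k : ℕ} (hk : k ≠ 0) :
    HasSum (fun y => invSubSq 0 y ^ k) ((-1) ^ k * intZeta (2 * k)) := by
  refine ((hasSum_inv_intCast_pow (by omega : 1 < 2 * k)).mul_left ((-1) ^ k)).congr_fun fun y => ?_
  rw [invSubSq, Int.cast_zero, zero_pow two_ne_zero, zero_sub, inv_neg, ← neg_one_mul, mul_pow,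
    ← inv_pow, ← pow_mul]

lemma hasSum_splitTerm_of_hasSum {x : ℤ} {r : ℕ → ℝ} {m : ℝ}
    (hr : ∀ k, HasSum (fun y => invSubSq x y ^ (k + 1)) (r k)) (hm : HasSum (wallIndicator x) m) :
    HasSum (fun t : ℤ × ℤ => splitTerm ((x : ℝ) ^ 2) ((t.1 : ℝ) ^ 2) ((t.2 : ℝ) ^ 2))
      (r 3 * r 1 + 2 * (r 4 * r 0) - 3 * (r 5 * m)) := by
  have hmul {f g : ℤ → ℝ} {a b : ℝ} (hf : HasSum f a) (hg : HasSum g b) :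
      HasSum (fun t : ℤ × ℤ => f t.2 * g t.1) (a * b) :=
    (Equiv.prodComm ℤ ℤ).hasSum_iff.2
      (hf.mul hg (summable_mul_of_summable_norm hf.summable.norm hg.summable.norm))
  simpa only [splitTerm, invSubSq, wallIndicator, zero_add, pow_one] using
    ((hmul (hr 3) (hr 1)).add ((hmul (hr 4) (hr 0)).mul_left 2)).sub ((hmul (hr 5) hm).mul_left 3)

/-- The sum of `splitTerm` over the plane of integer points with first coordinate `x`. The second
summand is the contribution of `x = 0`, where the first one vanishes. -/
noncomputable def splitTermPlaneSum (x : ℤ) : ℝ :=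
  (π ^ 6 / 15120 * (x : ℝ)⁻¹ ^ 6 - 13 * π ^ 4 / 1440 * (x : ℝ)⁻¹ ^ 8 -
      171 * π ^ 2 / 256 * (x : ℝ)⁻¹ ^ 10 + 1743 / 1024 * (x : ℝ)⁻¹ ^ 12) +
    if x = 0 then intZeta 8 * intZeta 4 + 2 * (intZeta 10 * intZeta 2) - 3 * intZeta 12 else 0

theorem hasSum_splitTerm_plane (x : ℤ) :
    HasSum (fun t : ℤ × ℤ => splitTerm ((x : ℝ) ^ 2) ((t.1 : ℝ) ^ 2) ((t.2 : ℝ) ^ 2))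
      (splitTermPlaneSum x) := by
  rcases eq_or_ne x 0 with rfl | hx
  · convert hasSum_splitTerm_of_hasSum
      (fun k => hasSum_invSubSq_zero_pow k.succ_ne_zero) hasSum_wallIndicator_zero using 1
    norm_num [splitTermPlaneSum]
  · convert hasSum_splitTerm_of_hasSum
      (hasSum_invSubSq_pow_succ hx) (hasSum_wallIndicator hx) using 1
    rw [splitTermPlaneSum, if_neg hx, mul_inv, invSubSqPowSum_zero, invSubSqPowSum_one,
      invSubSqPowSum_three, invSubSqPowSum_four, invSubSqPowSum_five]
    ring

theorem hasSum_splitTermPlaneSum :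
    HasSum splitTermPlaneSum (12 * (10411 * π ^ 12 / 1307674368000)) := by
  have hpow {k : ℕ} (hk : 1 < k) (c : ℝ) := (hasSum_inv_intCast_pow hk).mul_left c
  convert! ((((hpow (by decide : 1 < 6) (π ^ 6 / 15120)).sub
    (hpow (by decide : 1 < 8) (13 * π ^ 4 / 1440))).sub
    (hpow (by decide : 1 < 10) (171 * π ^ 2 / 256))).add
    (hpow (by decide : 1 < 12) (1743 / 1024))).add (hasSum_ite_eq 0 _) using 1
  rw [intZeta_two, intZeta_four, intZeta_six, intZeta_eight, intZeta_ten, intZeta_twelve]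
  ring

end Rows

section Summability

lemma abs_inv_intCast_le_one (n : ℤ) : |(n : ℝ)⁻¹| ≤ 1 := by
  rcases eq_or_ne n 0 with rfl | hn
  · simp
  · rw [abs_inv]
    exact inv_le_one_of_one_le₀ (mod_cast Int.one_le_abs hn)

lemma abs_invSubSq_le_one (x y : ℤ) : |invSubSq x y| ≤ 1 := by
  rw [invSubSq, ← Int.cast_pow, ← Int.cast_pow, ← Int.cast_sub]
  exact abs_inv_intCast_le_one _

lemma abs_invSubSq_pow_le {k : ℕ} (hk : k ≠ 0) (x y : ℤ) :
    |invSubSq x y ^ k| ≤ ((x - y : ℤ) : ℝ)⁻¹ ^ 2 + ((x + y : ℤ) : ℝ)⁻¹ ^ 2 := by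
  calc |invSubSq x y ^ k| = |invSubSq x y| ^ k := abs_pow _ _
    _ ≤ |invSubSq x y| := pow_le_of_le_one (abs_nonneg _) (abs_invSubSq_le_one x y) hk
    _ ≤ _ := by
      rw [invSubSq_eq_inv_mul_inv, Int.cast_sub, Int.cast_add]
      exact abs_mul_le_sq_add_sq _ _

lemma abs_wallIndicator_le (x y : ℤ) :
    |wallIndicator x y| ≤ (if x - y = 0 then 1 else 0) + if x + y = 0 then 1 else 0 := by
  rw [wallIndicator_eq_ite]
  norm_cast
  split_ifs <;> simp_all

lemma summable_invSubSq_pow {k : ℕ} (hk : 2 ≤ k) :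
    Summable fun t : ℤ × ℤ => invSubSq t.1 t.2 ^ k := by
  have hsq := (hasSum_inv_intCast_pow one_lt_two).summable
  have hinj : Function.Injective fun t : ℤ × ℤ => (t.1 - t.2, t.1 + t.2) := by
    rintro ⟨x, y⟩ ⟨x', y'⟩ h
    simp only [Prod.mk.injEq] at h ⊢
    omega
  have hprod := (summable_mul_of_summable_norm hsq.norm hsq.norm).comp_injective hinj
  refine hprod.of_norm_bounded fun t => ?_
  calc ‖invSubSq t.1 t.2 ^ k‖ = |invSubSq t.1 t.2| ^ k := abs_pow _ _
    _ ≤ |invSubSq t.1 t.2| ^ 2 := pow_le_pow_of_le_one (abs_nonneg _) (abs_invSubSq_le_one _ _) hk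
    _ = _ := by simp [sq_abs, invSubSq_eq_inv_mul_inv, mul_pow]

lemma summable_mul_of_abs_le {p q : ℤ → ℤ → ℝ} {B : ℤ → ℝ}
    (hp : Summable fun t : ℤ × ℤ => p t.1 t.2) (hB : Summable B)
    (hq : ∀ x y, |q x y| ≤ B (x - y) + B (x + y)) :
    Summable fun t : ℤ × ℤ × ℤ => p t.1 t.2.2 * q t.1 t.2.1 := by
  have hprod := (summable_mul_of_summable_norm hp.norm hB.norm).norm
  have hsub := hprod.comp_injective
    (i := fun t : ℤ × ℤ × ℤ => ((t.1, t.2.2), t.1 - t.2.1)) (by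
      rintro ⟨x, y, z⟩ ⟨x', y', z'⟩ h
      simp only [Prod.mk.injEq] at h ⊢
      omega)
  have hadd := hprod.comp_injective
    (i := fun t : ℤ × ℤ × ℤ => ((t.1, t.2.2), t.1 + t.2.1)) (by
      rintro ⟨x, y, z⟩ ⟨x', y', z'⟩ h
      simp only [Prod.mk.injEq] at h ⊢
      omega)
  refine (hsub.add hadd).of_norm_bounded fun t => ?_
  simp only [Function.comp_apply, norm_mul, ← mul_add, Real.norm_eq_abs]
  gcongr
  exact (hq _ _).trans (add_le_add (le_abs_self _) (le_abs_self _))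

theorem summable_splitTerm : Summable fun t : ℤ × ℤ × ℤ =>
    splitTerm ((t.1 : ℝ) ^ 2) ((t.2.1 : ℝ) ^ 2) ((t.2.2 : ℝ) ^ 2) := by
  have hsq := (hasSum_inv_intCast_pow one_lt_two).summable
  have hmul {k : ℕ} (hk : 2 ≤ k) {q : ℤ → ℤ → ℝ} {B : ℤ → ℝ} (hB : Summable B)
      (hq : ∀ x y, |q x y| ≤ B (x - y) + B (x + y)) :=
    summable_mul_of_abs_le (p := fun x z => invSubSq x z ^ k) (summable_invSubSq_pow hk) hB hq
  have h42 := hmul (by decide : 2 ≤ 4) (B := fun n => (n : ℝ)⁻¹ ^ 2) hsq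
    (abs_invSubSq_pow_le two_ne_zero)
  have h51 := hmul (by decide : 2 ≤ 5) (B := fun n => (n : ℝ)⁻¹ ^ 2) hsq
    (abs_invSubSq_pow_le one_ne_zero)
  have h6 := hmul (by decide : 2 ≤ 6) (B := fun n => if n = 0 then 1 else 0)
    (hasSum_ite_eq 0 1).summable abs_wallIndicator_le
  simpa only [splitTerm, invSubSq, wallIndicator, pow_one] using
    (h42.add (h51.mul_left 2)).sub (h6.mul_left 3)

theorem hasSum_splitTerm : HasSum
    (fun t : ℤ × ℤ × ℤ => splitTerm ((t.1 : ℝ) ^ 2) ((t.2.1 : ℝ) ^ 2) ((t.2.2 : ℝ) ^ 2))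
    (12 * (10411 * π ^ 12 / 1307674368000)) := by
  have h := summable_splitTerm.hasSum
  rwa [(h.prod_fiberwise hasSum_splitTerm_plane).unique hasSum_splitTermPlaneSum] at h

end Summability

section WeylTerm

/-- The summand in the coordinates in which the positive roots are `eᵢ ± eⱼ`, extended by `0` to the
walls of the Weyl chambers. -/
noncomputable def weylTerm (t : ℤ × ℤ × ℤ) : ℝ :=
  (invSubSq t.1 t.2.1 * invSubSq t.2.1 t.2.2 * invSubSq t.1 t.2.2) ^ 2

theorem hasSum_weylTerm : HasSum weylTerm (24 * (10411 * π ^ 12 / 1307674368000)) := by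
  let reverse : ℤ × ℤ × ℤ ≃ ℤ × ℤ × ℤ :=
    ⟨fun t => (t.2.2, t.2.1, t.1), fun t => (t.2.2, t.2.1, t.1), fun _ => rfl, fun _ => rfl⟩
  have hrev := hasSum_splitTerm
  rw [← reverse.hasSum_iff] at hrev
  convert! hasSum_splitTerm.add hrev using 1
  · funext t
    exact splitTerm_add_splitTerm ((t.1 : ℝ) ^ 2) ((t.2.1 : ℝ) ^ 2) ((t.2.2 : ℝ) ^ 2)
  · ring

lemma invSubSq_swap (x y : ℤ) : invSubSq y x = -invSubSq x y := by
  rw [invSubSq, invSubSq, ← inv_neg, neg_sub]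

lemma invSubSq_neg_left (x y : ℤ) : invSubSq (-x) y = invSubSq x y := by
  simp [invSubSq]

lemma invSubSq_neg_right (x y : ℤ) : invSubSq x (-y) = invSubSq x y := by
  simp [invSubSq]

lemma invSubSq_eq_zero {x y : ℤ} (h : x.natAbs = y.natAbs) : invSubSq x y = 0 := by
  have hsq : (x : ℝ) ^ 2 = (y : ℝ) ^ 2 := mod_cast Int.natAbs_eq_iff_sq_eq.1 h
  rw [invSubSq, hsq, sub_self, inv_zero]

end WeylTerm

section WeylSymmetry

variable {M : Type*} [AddCommMonoid M] [TopologicalSpace M] [ContinuousAdd M]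

theorem hasSum_of_symmetric {α β : Type*} [LinearOrder β] (r : α → β) {f : α × α × α → M} {s : M}
    (hswap₁ : ∀ x y z, f (y, x, z) = f (x, y, z)) (hswap₂ : ∀ x y z, f (x, z, y) = f (x, y, z))
    (hwall : ∀ x y z, r x = r y → f (x, y, z) = 0)
    (hs : HasSum ({t : α × α × α | r t.2.1 < r t.1 ∧ r t.2.2 < r t.2.1}.indicator f) s) :
    HasSum f (6 • s) := by
  let swap₁ : α × α × α ≃ α × α × α :=
    ⟨fun t => (t.2.1, t.1, t.2.2), fun t => (t.2.1, t.1, t.2.2), fun _ => rfl, fun _ => rfl⟩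
  let swap₂ : α × α × α ≃ α × α × α :=
    ⟨fun t => (t.1, t.2.2, t.2.1), fun t => (t.1, t.2.2, t.2.1), fun _ => rfl, fun _ => rfl⟩
  have hs₁ := swap₁.hasSum_iff.2 hs
  have hs₂ := swap₂.hasSum_iff.2 hs
  have hs₁₂ := swap₂.hasSum_iff.2 hs₁
  have hs₂₁ := swap₁.hasSum_iff.2 hs₂
  have hs₁₂₁ := swap₁.hasSum_iff.2 hs₁₂
  have h := ((((hs.add hs₁).add hs₂).add hs₁₂).add hs₂₁).add hs₁₂₁
  rw [show 6 • s = s + s + s + s + s + s by abel]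
  refine h.congr_fun ?_
  rintro ⟨x, y, z⟩
  have hwall₁ := hwall x y z
  have hwall₂ : r y = r z → f (x, y, z) = 0 := fun h => by
    rw [← hswap₁, ← hswap₂, hwall y z x h]
  have hwall₃ : r x = r z → f (x, y, z) = 0 := fun h => by rw [← hswap₂, hwall x z y h]
  have h₁ := hswap₁ x y z
  have h₂ := hswap₂ x y z
  have h₁₂ : f (z, x, y) = f (x, y, z) := by rw [hswap₁, hswap₂]
  have h₂₁ : f (y, z, x) = f (x, y, z) := by rw [hswap₂, hswap₁]
  have h₁₂₁ : f (z, y, x) = f (x, y, z) := by rw [hswap₂, hswap₁, hswap₂]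
  simp only [Function.comp_apply, Set.indicator_apply, Set.mem_ofPred_eq, swap₁, swap₂,
    Equiv.coe_fn_mk, h₁, h₂, h₁₂, h₂₁, h₁₂₁]
  generalize f (x, y, z) = c at *
  clear * - hwall₁ hwall₂ hwall₃
  grind

/-- The integer points of the open Weyl chamber of type `D₃` cut out by `e₁ - e₂`, `e₂ - e₃`
and `e₂ + e₃`. -/
def chamber : Set (ℤ × ℤ × ℤ) :=
  {t | t.2.1 < t.1 ∧ t.2.2 < t.2.1 ∧ -t.2.1 < t.2.2}

theorem hasSum_indicator_natAbs_lt {f : ℤ × ℤ × ℤ → M} {s : M}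
    (hneg₁ : ∀ x y z, f (-x, y, z) = f (x, y, z)) (hneg₂ : ∀ x y z, f (x, -y, z) = f (x, y, z))
    (hs : HasSum (chamber.indicator f) s) :
    HasSum ({t : ℤ × ℤ × ℤ |
      t.2.1.natAbs < t.1.natAbs ∧ t.2.2.natAbs < t.2.1.natAbs}.indicator f) (4 • s) := by
  let neg₁ : ℤ × ℤ × ℤ ≃ ℤ × ℤ × ℤ := (Equiv.neg ℤ).prodCongr (Equiv.refl _)
  let neg₂ : ℤ × ℤ × ℤ ≃ ℤ × ℤ × ℤ :=
    (Equiv.refl ℤ).prodCongr ((Equiv.neg ℤ).prodCongr (Equiv.refl ℤ))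
  have hs₁ := neg₁.hasSum_iff.2 hs
  have hs₂ := neg₂.hasSum_iff.2 hs
  have hs₁₂ := neg₂.hasSum_iff.2 hs₁
  have h := ((hs.add hs₁).add hs₂).add hs₁₂
  rw [show 4 • s = s + s + s + s by abel]
  refine h.congr_fun ?_
  rintro ⟨x, y, z⟩
  simp only [Function.comp_apply, Set.indicator_apply, Set.mem_ofPred_eq, neg₁, neg₂, chamber,
    Equiv.prodCongr_apply, Prod.map_apply, Equiv.neg_apply, Equiv.refl_apply, hneg₁, hneg₂]
  generalize f (x, y, z) = c
  split_ifs <;> first | omega | simp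

end WeylSymmetry

section Chamber

theorem tsum_weylTerm_chamber :
    ∑' t : chamber, weylTerm t = 10411 * π ^ 12 / 1307674368000 := by
  have hs := (hasSum_weylTerm.summable.indicator chamber).hasSum
  have h24 := hasSum_of_symmetric Int.natAbs (f := weylTerm)
    (fun x y z => by simp only [weylTerm, invSubSq_swap x y]; ring)
    (fun x y z => by simp only [weylTerm, invSubSq_swap y z]; ring)
    (fun x y z h => by simp [weylTerm, invSubSq_eq_zero h])
    (hasSum_indicator_natAbs_lt
      (fun x y z => by simp only [weylTerm, invSubSq_neg_left])
      (fun x y z => by simp only [weylTerm, invSubSq_neg_left, invSubSq_neg_right]) hs)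
  have h := hasSum_weylTerm.unique h24
  rw [← tsum_subtype, smul_smul, nsmul_eq_mul] at h
  push_cast at h
  linarith

lemma weylTerm_eq_one_div {x y z : ℤ} {l m n : ℕ} (hl : y - z = l) (hm : x - y = m)
    (hn : y + z = n) :
    weylTerm (x, y, z) = 1 / ((l : ℝ) ^ 2 * (m : ℝ) ^ 2 * (n : ℝ) ^ 2 * ((l + m : ℕ) : ℝ) ^ 2 *
      ((m + n : ℕ) : ℝ) ^ 2 * ((l + m + n : ℕ) : ℝ) ^ 2) := by
  have hyz : (y : ℝ) - z = l := mod_cast hl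
  have hxy : (x : ℝ) - y = m := mod_cast hm
  have hyz' : (y : ℝ) + z = n := mod_cast hn
  have hxz : (x : ℝ) - z = l + m := by linarith
  have hxz' : (x : ℝ) + z = m + n := by linarith
  have hxy' : (x : ℝ) + y = l + m + n := by linarith
  simp only [weylTerm, invSubSq_eq_inv_mul_inv, hyz, hxy, hyz', hxz, hxz', hxy', Nat.cast_add,
    one_div, mul_inv, mul_pow, inv_pow]
  ring

/-- The summand at the weight with marks `(t.1 + 1, t.2.1 + 1, t.2.2 + 1)`. -/
noncomputable def weightTerm (t : ℕ × ℕ × ℕ) : ℝ :=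
  1 / (((t.1 + 1 : ℕ) : ℝ) ^ 2 * ((t.2.1 + 1 : ℕ) : ℝ) ^ 2 * ((t.2.2 + 1 : ℕ) : ℝ) ^ 2 *
    ((t.1 + 1 + (t.2.1 + 1) : ℕ) : ℝ) ^ 2 * ((t.2.1 + 1 + (t.2.2 + 1) : ℕ) : ℝ) ^ 2 *
    ((t.1 + 1 + (t.2.1 + 1) + (t.2.2 + 1) : ℕ) : ℝ) ^ 2)

/-- A dominant regular weight with marks `(l + 1, m + 1, n + 1)` is the point `(x, y, z)` of the
chamber with `y - z = l + 1`, `x - y = m + 1` and `y + z = n + 1`; it is integral, i.e. a weight of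
`SO(6)`, exactly when the outer marks have the same parity. -/
def chamberEquiv : {t : ℕ × ℕ × ℕ | (t.1 + 1) % 2 = (t.2.2 + 1) % 2} ≃ chamber where
  toFun t := ⟨(((t.1.1 + t.1.2.2) / 2 + 1 + t.1.2.1 + 1 : ℕ), ((t.1.1 + t.1.2.2) / 2 + 1 : ℕ),
    ((t.1.2.2 : ℤ) - t.1.1) / 2), by
      have h := t.2
      simp only [Set.mem_ofPred_eq, chamber] at h ⊢
      omega⟩
  invFun t := ⟨((t.1.2.1 - t.1.2.2 - 1).toNat, (t.1.1 - t.1.2.1 - 1).toNat,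
    (t.1.2.1 + t.1.2.2 - 1).toNat), by
      have h := t.2
      simp only [Set.mem_ofPred_eq, chamber] at h ⊢
      omega⟩
  left_inv t := by
    have h := t.2
    ext <;> simp only [Set.mem_ofPred_eq] at h ⊢ <;> omega
  right_inv t := by
    have h := t.2
    ext <;> simp only [Set.mem_ofPred_eq, chamber] at h ⊢ <;> omega

lemma weylTerm_chamberEquiv (t : {t : ℕ × ℕ × ℕ | (t.1 + 1) % 2 = (t.2.2 + 1) % 2}) :
    weylTerm (chamberEquiv t) = weightTerm t := by
  have h := t.2
  rw [Set.mem_ofPred_eq] at h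
  apply weylTerm_eq_one_div <;> push_cast <;> omega

theorem tsum_weightTerm :
    ∑' t : {t : ℕ × ℕ × ℕ | (t.1 + 1) % 2 = (t.2.2 + 1) % 2}, weightTerm t =
      10411 * π ^ 12 / 1307674368000 := by
  rw [← tsum_weylTerm_chamber, ← chamberEquiv.tsum_eq]
  exact tsum_congr fun t => (weylTerm_chamberEquiv t).symm

end Chamber

end SO6

/-- `ζ₃((2,2,2,2,2,2); SO(6)) = 10411 π¹² / 1307674368000`
(Equation (6.4) of Komori–Matsumoto–Tsumura). -/
theorem SO6_value_two :
    (∑' t : ℕ × ℕ × ℕ,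
        if (t.1 + 1) % 2 = (t.2.2 + 1) % 2 then
          (1 : ℝ) /
            (((t.1 + 1 : ℕ) : ℝ) ^ 2 * ((t.2.1 + 1 : ℕ) : ℝ) ^ 2 *
              ((t.2.2 + 1 : ℕ) : ℝ) ^ 2 * ((t.1 + 1 + (t.2.1 + 1) : ℕ) : ℝ) ^ 2 *
              ((t.2.1 + 1 + (t.2.2 + 1) : ℕ) : ℝ) ^ 2 *
              ((t.1 + 1 + (t.2.1 + 1) + (t.2.2 + 1) : ℕ) : ℝ) ^ 2)
        else 0) = 10411 * π ^ 12 / 1307674368000 := by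
  rw [← SO6.tsum_weightTerm, tsum_subtype _ SO6.weightTerm]
  simp only [Set.indicator_apply, Set.mem_ofPred_eq, SO6.weightTerm]
end

section
/- Σ_{l,m,n ≥ 1} 1 / (l² m³ n³ (l+m)³ (m+n)³ (l+m+n)³) = (π⁶/63)·ζ(11) + (199π⁴/30)·ζ(13) − 365π²·ζ(15) + 2941·ζ(17). -/
open Complex Real

/-!
For integers `y ≠ z` let `S(y, z)` be the sum of `(x (x - y) (x - z))⁻³` over all integers `x` where
this is finite. In `∑ y⁻ᵃ z⁻ᵇ (y + z)⁻ᶜ S(y, y + z)`, taken over positive `y` and `z`, the position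
of `x` relative to `0`, `y`, `y + z` splits the triple sum into four signed values of the zeta
function of `A₃`. For `(a, b, c) = (2, 3, 3)` these collapse to `ζ(2, 3, 3, 3, 3, 3)`, because
`(l m)⁻¹ = (l (l + m))⁻¹ + (m (l + m))⁻¹`, and for `(3, 3, 2)` they cancel, because of the symmetry
of the Dynkin diagram. Splitting `∑ z⁻³ y⁻² (y - z)⁻³ S(y, z)`, taken over `z ≥ 1` and all integers
`y`, in the same way according to the position of `y` relative to `0` and `z` therefore gives
`-2 ζ(2, 3, 3, 3, 3, 3)`. On the other hand, two partial fraction expansions, in `x` and then in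
`y`, turn this sum into a combination of the numbers `ζ(2 i) ζ(2 j) ζ(k)`.
-/

open Filter Function Topology

namespace A3

section Summation

theorem hasSum_sum_of_injective {J ι κ M : Type*} [Fintype J] [AddCommMonoid M]
    [TopologicalSpace M] [ContinuousAdd M] {e : J → ι → κ} {f : κ → M} {s : J → M}
    (he : Injective fun p : J × ι => e p.1 p.2) (hf : ∀ k, f k ≠ 0 → ∃ j i, e j i = k)
    (hs : ∀ j, HasSum (fun i => f (e j i)) (s j)) : HasSum f (∑ j, s j) := by
  have hinj (j : J) : Injective (e j) := fun i i' h => (Prod.ext_iff.1 (@he (j, i) (j, i') h)).2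
  have hdisj : ((Finset.univ : Finset J) : Set J).Pairwise
      (Disjoint on fun j => Set.range (e j)) := by
    intro j _ j' _ hjj'
    refine Set.disjoint_left.2 ?_
    rintro _ ⟨i, rfl⟩ ⟨i', hi'⟩
    exact hjj' (Prod.ext_iff.1 (@he (j', i') (j, i) hi')).1.symm
  have hunion := hasSum_sum_disjoint Finset.univ hdisj
    fun j _ => (hinj j).hasSum_range_iff.2 (hs j)
  refine (hasSum_subtype_iff_of_support_subset fun k hk => ?_).1 hunion
  obtain ⟨j, i, hji⟩ := hf k hk
  exact Set.mem_biUnion (Finset.mem_univ j) ⟨i, hji⟩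

theorem summable_int_inv_pow {k : ℕ} (hk : 2 ≤ k) : Summable fun x : ℤ => (x : ℂ)⁻¹ ^ k := by
  have h : Summable fun x : ℤ => ((1 / (x : ℝ) ^ k : ℝ) : ℂ) :=
    Complex.summable_ofReal.2 (Real.summable_one_div_int_pow.2 hk)
  simpa using h

theorem hasSum_int_sub_add_one {E : Type*} [AddCommGroup E] [TopologicalSpace E] [T2Space E]
    [ContinuousSub E] {g : ℤ → E} (hg : Tendsto g cofinite (𝓝 0))
    (hs : Summable fun x => g x - g (x + 1)) : HasSum (fun x => g x - g (x + 1)) 0 := by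
  have hneg : Tendsto (fun N : ℕ => g (-N)) atTop (𝓝 0) := by
    have : Injective fun N : ℕ => -(N : ℤ) := fun _ _ h => by simpa using h
    simpa [Nat.cofinite_eq_atTop] using! hg.comp this.tendsto_cofinite
  have hpos : Tendsto (fun N : ℕ => g N) atTop (𝓝 0) := by
    simpa [Nat.cofinite_eq_atTop] using! hg.comp Nat.cast_injective.tendsto_cofinite
  obtain ⟨s, hs⟩ := hs
  have hlim :
      Tendsto (fun N : ℕ => ∑ x ∈ Finset.Ico (-N : ℤ) N, (g x - g (x + 1))) atTop (𝓝 s) :=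
    SummationFilter.hasSum_symmetricIco_int_iff.1
      (Tendsto.mono_left hs (SummationFilter.LeAtTop.le_atTop))
  have hlim' :
      Tendsto (fun N : ℕ => ∑ x ∈ Finset.Ico (-N : ℤ) N, (g x - g (x + 1))) atTop (𝓝 0) := by
    simpa only [Finset.sum_Ico_int_sub, sub_zero] using hneg.sub hpos
  rwa [tendsto_nhds_unique hlim hlim'] at hs

theorem tendsto_int_inv_cofinite : Tendsto (fun x : ℤ => (x : ℂ)⁻¹) cofinite (𝓝 0) := by
  rw [Int.cofinite_eq]
  exact tendsto_inv₀_cobounded.comp tendsto_intCast_atBot_sup_atTop_cobounded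

theorem summable_int_inv_sub_inv (y : ℤ) :
    Summable fun x : ℤ => (x : ℂ)⁻¹ - ((x - y : ℤ) : ℂ)⁻¹ := by
  have := (EisensteinSeries.summable_linear_sub_mul_linear_add 1 y 0).mul_left (y : ℂ)
  refine (summable_congr_cofinite ?_).1 this
  filter_upwards [(Set.finite_singleton (0 : ℤ)).compl_mem_cofinite,
    (Set.finite_singleton y).compl_mem_cofinite] with x hx hxy
  have hx0 : (x : ℂ) ≠ 0 := by exact_mod_cast hx
  have hxy0 : (x : ℂ) - y ≠ 0 := sub_ne_zero.2 (by exact_mod_cast hxy)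
  have hyx0 : (y : ℂ) - x ≠ 0 := sub_ne_zero.2 (by exact_mod_cast Ne.symm hxy)
  simp only [Int.cast_zero, zero_add, mul_one, Int.cast_sub]
  field_simp
  ring

theorem hasSum_int_inv_sub_inv (y : ℤ) :
    HasSum (fun x : ℤ => (x : ℂ)⁻¹ - ((x - y : ℤ) : ℂ)⁻¹) 0 := by
  have hstep (y : ℤ) :
      HasSum (fun x : ℤ => ((x - (y + 1) : ℤ) : ℂ)⁻¹ - ((x - y : ℤ) : ℂ)⁻¹) 0 := by
    have h := hasSum_int_sub_add_one tendsto_int_inv_cofinite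
      (by simpa using summable_int_inv_sub_inv (-1))
    simpa [Function.comp_def, sub_add_eq_sub_sub] using (Equiv.subRight (y + 1)).hasSum_iff.2 h
  induction y with
  | zero => simp
  | succ y ih => simpa using ih.sub (hstep y)
  | pred y ih => simpa using ih.add (hstep (-y - 1))

/-- The principal part `∑ cₖ wᵏ⁺¹` of a rational function at a pole `a`, as a polynomial in
`w = (x - a)⁻¹`; `c 0` is the residue. -/
noncomputable def principalPart {N : ℕ} (c : Fin (N + 1) → ℂ) (w : ℂ) : ℂ :=
  ∑ k, c k * w ^ (k + 1 : ℕ)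

/-- The sum `∑ x⁻ᵏ` over all integers `x`, where `0⁻¹ = 0`. -/
noncomputable def intZeta (k : ℕ) : ℂ :=
  ∑' x : ℤ, (x : ℂ)⁻¹ ^ k

theorem hasSum_int_inv_sub_pow (a : ℤ) {k : ℕ} (hk : 2 ≤ k) :
    HasSum (fun x : ℤ => ((x - a : ℤ) : ℂ)⁻¹ ^ k) (intZeta k) :=
  (Equiv.subRight a).hasSum_iff.2 (summable_int_inv_pow hk).hasSum

theorem hasSum_principalPart {ι : Type*} [Fintype ι] {N : ℕ} (a : ι → ℤ)
    (c : ι → Fin (N + 1) → ℂ) (hc : ∑ i, c i 0 = 0) :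
    HasSum (fun x : ℤ => ∑ i, principalPart (c i) ((x - a i : ℤ) : ℂ)⁻¹)
      (∑ i, ∑ k : Fin N, c i k.succ * intZeta (k + 2)) := by
  have hres : HasSum (fun x : ℤ => ∑ i, c i 0 * ((x - a i : ℤ) : ℂ)⁻¹) 0 := by
    have h := (hasSum_sum (s := Finset.univ) fun i _ =>
      (hasSum_int_inv_sub_inv (a i)).mul_left (c i 0)).neg
    simp only [mul_zero, Finset.sum_const_zero, neg_zero] at h
    refine h.congr_fun fun x => ?_
    simp only [mul_sub, Finset.sum_sub_distrib, ← Finset.sum_mul, hc, zero_mul, zero_sub, neg_neg]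
  have htail := hasSum_sum (s := Finset.univ) fun i _ =>
    hasSum_sum (s := Finset.univ) fun (k : Fin N) _ =>
      (hasSum_int_inv_sub_pow (a i) (Nat.le_add_left 2 k)).mul_left (c i k.succ)
  rw [← zero_add (∑ i, _)]
  refine (hres.add htail).congr_fun fun x => ?_
  simp only [principalPart, Fin.sum_univ_succ, Finset.sum_add_distrib, Fin.val_zero, zero_add,
    pow_one, Fin.val_succ, add_assoc, one_add_one_eq_two]

/-- With `0⁻¹ = 0`, the principal parts at a pole `a i` add up to the constant Laurent coefficient
there instead of to `f (a i) = 0`; the subtracted double sum corrects this. -/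
theorem hasSum_of_eq_sum_principalPart {ι : Type*} [Fintype ι] {N : ℕ} {a : ι → ℤ}
    (ha : Injective a) {c : ι → Fin (N + 1) → ℂ} (hc : ∑ i, c i 0 = 0) {f : ℤ → ℂ}
    (hfa : ∀ i, f (a i) = 0)
    (hf : ∀ x, (∀ i, x ≠ a i) → f x = ∑ i, principalPart (c i) ((x - a i : ℤ) : ℂ)⁻¹) :
    HasSum f (∑ i, ∑ k : Fin N, c i k.succ * intZeta (k + 2) -
      ∑ i, ∑ j, principalPart (c j) ((a i - a j : ℤ) : ℂ)⁻¹) := by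
  classical
  have hcorr := hasSum_sum (s := Finset.univ) fun i _ =>
    hasSum_ite_eq (a i) (∑ j, principalPart (c j) ((a i - a j : ℤ) : ℂ)⁻¹)
  refine ((hasSum_principalPart a c hc).sub hcorr).congr_fun fun x => ?_
  by_cases hx : ∃ i, x = a i
  · obtain ⟨i, rfl⟩ := hx
    simp [hfa, ha.eq_iff]
  · push Not at hx
    simp [hf x hx, hx]

end Summation

section SpecialValues

theorem bernoulli_six : bernoulli 6 = 1 / 42 := by
  rw [bernoulli_eq_bernoulli'_of_ne_one (by norm_num), bernoulli'_def]
  norm_num [Finset.sum_range_succ, Nat.choose, bernoulli'_eq_zero_of_odd (n := 5) (by decide)]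

theorem bernoulli_eight : bernoulli 8 = -1 / 30 := by
  rw [bernoulli_eq_bernoulli'_of_ne_one (by norm_num), bernoulli'_def]
  norm_num [Finset.sum_range_succ, Nat.choose, bernoulli'_eq_zero_of_odd (n := 5) (by decide),
    bernoulli'_eq_zero_of_odd (n := 7) (by decide),
    ← bernoulli_eq_bernoulli'_of_ne_one (n := 6), bernoulli_six]

theorem riemannZeta_six : riemannZeta 6 = (π : ℂ) ^ 6 / 945 := by
  have h := riemannZeta_two_mul_nat three_ne_zero
  norm_num [bernoulli_six, Nat.factorial] at h
  rw [h]
  ring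

theorem riemannZeta_eight : riemannZeta 8 = (π : ℂ) ^ 8 / 9450 := by
  have h := riemannZeta_two_mul_nat four_ne_zero
  norm_num [bernoulli_eight, Nat.factorial] at h
  rw [h]
  ring

theorem intZeta_of_odd {k : ℕ} (hk : Odd k) : intZeta k = 0 := by
  have h : intZeta k = -intZeta k := by
    rw [intZeta, ← tsum_neg, ← (Equiv.neg ℤ).tsum_eq]
    exact tsum_congr fun x => by simp [inv_neg, hk.neg_pow]
  exact self_eq_neg.1 h

theorem intZeta_of_even {k : ℕ} (hk : 2 ≤ k) (hk' : Even k) :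
    intZeta k = 2 * riemannZeta k := by
  rw [two_mul_riemannZeta_eq_tsum_int_inv_pow_of_even hk hk', intZeta]
  simp

theorem intZeta_two : intZeta 2 = (π : ℂ) ^ 2 / 3 := by
  rw [intZeta_of_even le_rfl even_two, Nat.cast_ofNat, riemannZeta_two]
  ring

theorem intZeta_four : intZeta 4 = (π : ℂ) ^ 4 / 45 := by
  rw [intZeta_of_even (by norm_num) (by decide), Nat.cast_ofNat, riemannZeta_four]
  ring

theorem intZeta_six : intZeta 6 = 2 * (π : ℂ) ^ 6 / 945 := by
  rw [intZeta_of_even (by norm_num) (by decide), Nat.cast_ofNat, riemannZeta_six]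
  ring

theorem intZeta_eight : intZeta 8 = (π : ℂ) ^ 8 / 4725 := by
  rw [intZeta_of_even (by norm_num) (by decide), Nat.cast_ofNat, riemannZeta_eight]
  ring

theorem hasSum_nat_inv_pow {k : ℕ} (hk : 2 ≤ k) :
    HasSum (fun n : ℕ => (n + 1 : ℂ)⁻¹ ^ k) (riemannZeta k) := by
  have hsum : Summable fun n : ℕ => (n + 1 : ℂ)⁻¹ ^ k := by
    have hinj : Injective fun n : ℕ => (n + 1 : ℤ) := fun _ _ h => by simpa using h
    simpa [comp_def] using (summable_int_inv_pow hk).comp_injective hinj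
  rw [zeta_eq_tsum_one_div_nat_add_one_cpow (by simpa using one_lt_two.trans_le hk)]
  simpa using hsum.hasSum

end SpecialValues

section PartialFractions

/-- For `u = (a - b)⁻¹` and `v = (a - c)⁻¹`, the coefficients of the principal part of
`((x - a) (x - b) (x - c))⁻³` at the pole `a`. -/
noncomputable def cubicCoeff (u v : ℂ) : Fin 3 → ℂ :=
  ![u ^ 3 * v ^ 3 * (6 * u ^ 2 + 9 * u * v + 6 * v ^ 2), 3 * u ^ 3 * v ^ 3 * (u + v), u ^ 3 * v ^ 3]

theorem principalPart_cubicCoeff (u v w : ℂ) :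
    principalPart (cubicCoeff u v) w =
      u ^ 3 * v ^ 3 * ((6 * u ^ 2 + 9 * u * v + 6 * v ^ 2) * w + 3 * (u + v) * w ^ 2 + w ^ 3) := by
  refine (Fin.sum_univ_three _).trans ?_
  simp only [cubicCoeff, Matrix.cons_val, Fin.val_zero, Fin.val_one, Fin.val_two]
  ring

theorem inv_cubic_eq_sum_principalPart {x y z : ℂ} (hx : x ≠ 0) (hy : y ≠ 0) (hz : z ≠ 0)
    (hyz : z ≠ y) (hxy : x ≠ y) (hxz : x ≠ z) :
    (x ^ 3 * (x - y) ^ 3 * (x - z) ^ 3)⁻¹ = principalPart (cubicCoeff y⁻¹ z⁻¹) x⁻¹ +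
      principalPart (cubicCoeff (-y)⁻¹ (z - y)⁻¹) (x - y)⁻¹ +
      principalPart (cubicCoeff (-z)⁻¹ (y - z)⁻¹) (x - z)⁻¹ := by
  rw [← sub_ne_zero] at hyz hxy hxz
  simp only [principalPart_cubicCoeff, ← neg_sub z y, inv_neg]
  field_simp
  ring

/-- The sum of `(x (x - y) (x - z))⁻³` over the integers `x` other than the poles `0`, `y`, `z`; at
the poles the term is `0⁻¹ = 0`. -/
noncomputable def cubicSum (y z : ℤ) : ℂ :=
  ∑' x : ℤ, ((x : ℂ) ^ 3 * (x - y) ^ 3 * (x - z) ^ 3)⁻¹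

/-- For `u = (a - b)⁻¹` and `v = (a - c)⁻¹`, the contribution of the pole `a` to the sum of
`((x - a) (x - b) (x - c))⁻³` over the integers `x`: its principal part summed over `x ≠ a`, minus
the constant Laurent coefficient at `a`. -/
noncomputable def cubicSumPart (u v : ℂ) : ℂ :=
  u ^ 3 * v ^ 3 * (3 * intZeta 2 * (u + v) -
    (10 * u ^ 3 + 18 * u ^ 2 * v + 18 * u * v ^ 2 + 10 * v ^ 3))

theorem cubicCoeff_residue_sum {y z : ℂ} (hy : y ≠ 0) (hz : z ≠ 0) (hyz : z ≠ y) :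
    cubicCoeff y⁻¹ z⁻¹ 0 + cubicCoeff (-y)⁻¹ (z - y)⁻¹ 0 + cubicCoeff (-z)⁻¹ (y - z)⁻¹ 0 = 0 := by
  rw [← sub_ne_zero] at hyz
  simp only [Matrix.cons_val, cubicCoeff, ← neg_sub z y, inv_neg]
  field_simp
  ring

theorem cubicSum_eq {y z : ℤ} (hy : y ≠ 0) (hz : z ≠ 0) (hyz : z ≠ y) :
    cubicSum y z = cubicSumPart (y : ℂ)⁻¹ (z : ℂ)⁻¹ + cubicSumPart (-y : ℂ)⁻¹ (z - y : ℂ)⁻¹ +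
      cubicSumPart (-z : ℂ)⁻¹ (y - z : ℂ)⁻¹ := by
  have hy' : (y : ℂ) ≠ 0 := Int.cast_ne_zero.2 hy
  have hz' : (z : ℂ) ≠ 0 := Int.cast_ne_zero.2 hz
  have hyz' : (z : ℂ) ≠ y := Int.cast_injective.ne hyz
  have hzy0 : (z : ℂ) - y ≠ 0 := sub_ne_zero.2 hyz'
  have hinj : Injective ![0, y, z] := by
    intro i j hij
    fin_cases i <;> fin_cases j <;> simp_all
  have h := hasSum_of_eq_sum_principalPart hinj
    (c := ![cubicCoeff (y : ℂ)⁻¹ (z : ℂ)⁻¹, cubicCoeff (-y : ℂ)⁻¹ (z - y : ℂ)⁻¹,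
      cubicCoeff (-z : ℂ)⁻¹ (y - z : ℂ)⁻¹])
    (f := fun x : ℤ => ((x : ℂ) ^ 3 * (x - y) ^ 3 * (x - z) ^ 3)⁻¹) ?residue ?pole ?regular
  case residue =>
    simpa only [Fin.sum_univ_three, Matrix.cons_val] using cubicCoeff_residue_sum hy' hz' hyz'
  case pole =>
    intro i
    fin_cases i <;> simp
  case regular =>
    intro x hx
    have hx0 : (x : ℂ) ≠ 0 := Int.cast_ne_zero.2 (hx 0)
    have hxy : (x : ℂ) ≠ y := Int.cast_injective.ne (hx 1)
    have hxz : (x : ℂ) ≠ z := Int.cast_injective.ne (hx 2)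
    simpa [Fin.sum_univ_three] using inv_cubic_eq_sum_principalPart hx0 hy' hz' hyz' hxy hxz
  rw [cubicSum, h.tsum_eq]
  simp only [Fin.sum_univ_three, Fin.sum_univ_two, Matrix.cons_val, principalPart_cubicCoeff,
    Int.cast_sub, Int.cast_zero, sub_self, inv_zero, zero_sub, sub_zero, ← neg_sub (z : ℂ) y,
    inv_neg]
  simp only [cubicSumPart, cubicCoeff, Matrix.cons_val, Fin.succ_zero_eq_one,
    Fin.succ_one_eq_two, Fin.val_zero, Fin.val_one, zero_add,
    intZeta_of_odd (show Odd (1 + 2) by decide)]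
  field_simp
  ring

/-- The sum over the integers `x` of the inverse product of the pairwise differences of `0`, `y`,
`z`, `x`, each cubed except for `y`, which is squared. -/
noncomputable def outerTerm (y z : ℤ) : ℂ :=
  ((z : ℂ) ^ 3 * y ^ 2 * (y - z) ^ 3)⁻¹ * cubicSum y z

/-- For `v = z⁻¹`, the coefficients of the principal part of `outerTerm y z` at `y = 0`, where
`cubicSum y z` is replaced by the rational function of `cubicSum_eq`. -/
noncomputable def outerCoeffZero (v : ℂ) : Fin 9 → ℂ :=
  ![1566 * v ^ 16 - 195 * intZeta 2 * v ^ 14, 1566 * v ^ 15 - 195 * intZeta 2 * v ^ 13,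
    1170 * v ^ 14 - 132 * intZeta 2 * v ^ 12, 774 * v ^ 13 - 69 * intZeta 2 * v ^ 11,
    462 * v ^ 12 - 27 * intZeta 2 * v ^ 10, 234 * v ^ 11 - 6 * intZeta 2 * v ^ 9,
    90 * v ^ 10, 20 * v ^ 9, 0]

/-- For `v = z⁻¹`, the coefficients of the principal part of `outerTerm y z` at `y = z`, where
`cubicSum y z` is replaced by the rational function of `cubicSum_eq`. -/
noncomputable def outerCoeffSelf (v : ℂ) : Fin 9 → ℂ :=
  ![-(1566 * v ^ 16 - 195 * intZeta 2 * v ^ 14), 0, 396 * v ^ 14 - 63 * intZeta 2 * v ^ 12,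
    -396 * v ^ 13 + 63 * intZeta 2 * v ^ 11, 312 * v ^ 12 - 42 * intZeta 2 * v ^ 10,
    -228 * v ^ 11 + 21 * intZeta 2 * v ^ 9, 144 * v ^ 10 - 6 * intZeta 2 * v ^ 8,
    -70 * v ^ 9, 20 * v ^ 8]

theorem outerTerm_eq_sum_principalPart {y z : ℂ} (hy : y ≠ 0) (hz : z ≠ 0) (hyz : y ≠ z) :
    (z ^ 3 * y ^ 2 * (y - z) ^ 3)⁻¹ * (cubicSumPart y⁻¹ z⁻¹ + cubicSumPart (-y)⁻¹ (z - y)⁻¹ +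
        cubicSumPart (-z)⁻¹ (y - z)⁻¹) =
      principalPart (outerCoeffZero z⁻¹) y⁻¹ + principalPart (outerCoeffSelf z⁻¹) (y - z)⁻¹ := by
  rw [← sub_ne_zero] at hyz
  simp only [principalPart, outerCoeffZero, outerCoeffSelf, cubicSumPart, Fin.sum_univ_castSucc,
    Finset.univ_eq_empty, Finset.sum_empty, Fin.last_zero, Fin.reduceLast, Fin.castSucc_zero,
    Fin.castSucc_one, Fin.reduceCastSucc, Fin.val_castSucc, Fin.coe_ofNat_eq_mod, Nat.reduceMod,
    Nat.reduceAdd, Matrix.cons_val, ← neg_sub y z, inv_neg]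
  field_simp
  ring

theorem hasSum_outerTerm {z : ℤ} (hz : z ≠ 0) :
    HasSum (fun y : ℤ => outerTerm y z)
      (-5882 * (z : ℂ)⁻¹ ^ 17 + 2190 * intZeta 2 * (z : ℂ)⁻¹ ^ 15 +
        (378 * intZeta 4 - 195 * intZeta 2 ^ 2) * (z : ℂ)⁻¹ ^ 13 +
        (6 * intZeta 6 - 6 * intZeta 2 * intZeta 4) * (z : ℂ)⁻¹ ^ 11 +
        (15 * intZeta 2 * intZeta 6 - 50 * intZeta 8) * (z : ℂ)⁻¹ ^ 9) := by
  have hz' : (z : ℂ) ≠ 0 := Int.cast_ne_zero.2 hz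
  have hinj : Injective ![0, z] := by
    intro i j hij
    fin_cases i <;> fin_cases j <;> simp_all
  have h := hasSum_of_eq_sum_principalPart hinj
    (c := ![outerCoeffZero (z : ℂ)⁻¹, outerCoeffSelf (z : ℂ)⁻¹])
    (f := fun y : ℤ => outerTerm y z) ?residue ?pole ?regular
  case residue => simp [outerCoeffZero, outerCoeffSelf]
  case pole =>
    intro i
    fin_cases i <;> simp [outerTerm]
  case regular =>
    intro y hy
    have hy0 : y ≠ 0 := hy 0
    have hyz : y ≠ z := hy 1
    simpa [outerTerm, cubicSum_eq hy0 hz hyz.symm] using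
      outerTerm_eq_sum_principalPart (Int.cast_ne_zero.2 hy0) hz' (Int.cast_injective.ne hyz)
  convert h using 1
  simp only [principalPart, outerCoeffZero, outerCoeffSelf, Fin.sum_univ_castSucc,
    Finset.univ_eq_empty, Finset.sum_empty, Fin.last_zero, Fin.reduceLast, Fin.castSucc_zero,
    Fin.castSucc_one, Fin.reduceCastSucc, Fin.val_castSucc, Fin.coe_ofNat_eq_mod, Nat.reduceMod,
    Nat.reduceAdd, Matrix.cons_val, Fin.succ_zero_eq_one, Fin.succ_one_eq_two, Fin.reduceSucc,
    Int.cast_zero, Int.cast_sub, sub_self, sub_zero, zero_sub, inv_neg, inv_zero,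
    intZeta_of_odd (show Odd 3 by decide), intZeta_of_odd (show Odd 5 by decide),
    intZeta_of_odd (show Odd 7 by decide), intZeta_of_odd (show Odd 9 by decide)]
  ring

end PartialFractions

section RootZeta

theorem inv_neg_pow (w : ℂ) (k : ℕ) : ((-w) ^ k)⁻¹ = (-1) ^ k * (w ^ k)⁻¹ := by
  rw [neg_pow, mul_inv, ← inv_pow, inv_neg_one]

/-- The term of the zeta function of the root system `A₃`: `l`, `m`, `n` are the values of the
simple roots, and the exponents belong to the positive roots in the order `l`, `m`, `n`, `l + m`,
`m + n`, `l + m + n`. -/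
noncomputable def zetaTerm (a b c d e f : ℕ) (l m n : ℂ) : ℂ :=
  (l ^ a * m ^ b * n ^ c * (l + m) ^ d * (m + n) ^ e * (l + m + n) ^ f)⁻¹

/-- The zeta function of the root system `A₃` at natural exponents. -/
noncomputable def zeta (a b c d e f : ℕ) : ℂ :=
  ∑' t : ℕ × ℕ × ℕ, zetaTerm a b c d e f (t.1 + 1) (t.2.1 + 1) (t.2.2 + 1)

theorem norm_zetaTerm_le {a b c : ℕ} (d e f : ℕ) (ha : 2 ≤ a) (hb : 2 ≤ b) (hc : 2 ≤ c)
    (l m n : ℕ) : ‖zetaTerm a b c d e f (l + 1) (m + 1) (n + 1)‖ ≤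
      ((l + 1 : ℝ) ^ 2)⁻¹ * (((m + 1 : ℝ) ^ 2)⁻¹ * ((n + 1 : ℝ) ^ 2)⁻¹) := by
  have hpow {k j : ℕ} (hk : 2 ≤ k) : (j + 1) ^ 2 ≤ (j + 1) ^ k :=
    Nat.pow_le_pow_right j.succ_pos hk
  have hle : (l + 1) ^ 2 * ((m + 1) ^ 2 * (n + 1) ^ 2) ≤ (l + 1) ^ a * (m + 1) ^ b * (n + 1) ^ c *
      (l + 1 + (m + 1)) ^ d * (m + 1 + (n + 1)) ^ e * (l + 1 + (m + 1) + (n + 1)) ^ f :=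
    calc
      _ = (l + 1) ^ 2 * (m + 1) ^ 2 * (n + 1) ^ 2 * 1 * 1 * 1 := by ring
      _ ≤ _ := by
        gcongr ?_ * ?_ * ?_ * ?_ * ?_ * ?_
        exacts [hpow ha, hpow hb, hpow hc, Nat.one_le_pow _ _ (by omega),
          Nat.one_le_pow _ _ (by omega), Nat.one_le_pow _ _ (by omega)]
  have hterm : zetaTerm a b c d e f (l + 1) (m + 1) (n + 1) =
      (((l + 1) ^ a * (m + 1) ^ b * (n + 1) ^ c * (l + 1 + (m + 1)) ^ d * (m + 1 + (n + 1)) ^ e *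
        (l + 1 + (m + 1) + (n + 1)) ^ f : ℕ) : ℂ)⁻¹ := by
    rw [zetaTerm]
    push_cast
    rfl
  rw [hterm, norm_inv, Complex.norm_natCast, ← mul_inv, ← mul_inv]
  exact inv_anti₀ (by positivity) (by exact_mod_cast hle)

theorem summable_zetaTerm {a b c : ℕ} (d e f : ℕ) (ha : 2 ≤ a) (hb : 2 ≤ b) (hc : 2 ≤ c) :
    Summable fun t : ℕ × ℕ × ℕ => zetaTerm a b c d e f (t.1 + 1) (t.2.1 + 1) (t.2.2 + 1) := by
  have h : Summable fun n : ℕ => ((n + 1 : ℝ) ^ 2)⁻¹ := by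
    exact_mod_cast (summable_nat_add_iff 1).2 (Real.summable_nat_pow_inv.2 one_lt_two)
  have h0 : 0 ≤ fun n : ℕ => ((n + 1 : ℝ) ^ 2)⁻¹ := fun n => by positivity
  exact .of_norm_bounded (h.mul_of_nonneg (h.mul_of_nonneg h h0 h0) h0 fun t => by positivity)
    fun t => norm_zetaTerm_le d e f ha hb hc t.1 t.2.1 t.2.2

theorem hasSum_zeta {a b c : ℕ} (d e f : ℕ) (ha : 2 ≤ a) (hb : 2 ≤ b) (hc : 2 ≤ c) :
    HasSum (fun t : ℕ × ℕ × ℕ => zetaTerm a b c d e f (t.1 + 1) (t.2.1 + 1) (t.2.2 + 1))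
      (zeta a b c d e f) :=
  (summable_zetaTerm d e f ha hb hc).hasSum

theorem zeta_reverse (a b c d e f : ℕ) : zeta a b c d e f = zeta c b a e d f := by
  let r : ℕ × ℕ × ℕ ≃ ℕ × ℕ × ℕ :=
    { toFun := fun t => (t.2.2, t.2.1, t.1)
      invFun := fun t => (t.2.2, t.2.1, t.1)
      left_inv := fun _ => rfl
      right_inv := fun _ => rfl }
  rw [zeta, ← r.tsum_eq]
  refine tsum_congr fun t => ?_
  simp only [r, Equiv.coe_fn_mk, zetaTerm]
  ring

theorem zeta_add_eq {a b c : ℕ} (d e f : ℕ) (ha : 2 ≤ a) (hb : 2 ≤ b) (hc : 2 ≤ c) :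
    zeta a (b + 1) c (d + 1) e f + zeta (a + 1) b c (d + 1) e f =
      zeta (a + 1) (b + 1) c d e f := by
  have h := (hasSum_zeta (d + 1) e f ha (Nat.le_succ_of_le hb) hc).add
    (hasSum_zeta (d + 1) e f (Nat.le_succ_of_le ha) hb hc)
  rw [← h.tsum_eq, zeta]
  refine tsum_congr fun ⟨l, m, n⟩ => ?_
  have hl : (l + 1 : ℂ) ≠ 0 := l.cast_add_one_ne_zero
  have hm : (m + 1 : ℂ) ≠ 0 := m.cast_add_one_ne_zero
  have hlm : (l + 1 + (m + 1) : ℂ) ≠ 0 := by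
    exact_mod_cast (Nat.succ_ne_zero _ : l + 1 + m + 1 ≠ 0)
  simp only [zetaTerm, pow_succ]
  field_simp

/-- The inverse product of powers of the differences of the four points `0`, `y`, `y + z`, `x` of a
line; up to sign these are the positive roots of `A₃`, whichever position `x` takes. -/
noncomputable def planeTerm (a b c p q r : ℕ) (y z x : ℂ) : ℂ :=
  (y ^ a * z ^ b * (y + z) ^ c)⁻¹ * (x ^ p * (x - y) ^ q * (x - (y + z)) ^ r)⁻¹

section
variable (a b c p q r : ℕ) (l m n : ℂ)

theorem planeTerm_above :
    planeTerm a b c p q r l m (l + m + n) = zetaTerm a b r c q p l m n := by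
  rw [planeTerm, zetaTerm, show l + m + n - l = m + n by ring, add_sub_cancel_left]
  ring

theorem planeTerm_upper :
    planeTerm a b c p q r l (m + n) (l + m) = (-1) ^ r * zetaTerm a q r p b c l m n := by
  rw [planeTerm, zetaTerm, add_sub_cancel_left, show l + m - (l + (m + n)) = -n by ring]
  simp only [mul_inv, inv_neg_pow]
  ring

theorem planeTerm_lower :
    planeTerm a b c p q r (l + m) n l = (-1) ^ (q + r) * zetaTerm p q b a r c l m n := by
  rw [planeTerm, zetaTerm, show l - (l + m) = -m by ring, show l - (l + m + n) = -(m + n) by ring]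
  simp only [mul_inv, inv_neg_pow]
  ring

theorem planeTerm_below :
    planeTerm a b c p q r m n (-l) = (-1) ^ (p + q + r) * zetaTerm p a b q c r l m n := by
  rw [planeTerm, zetaTerm, show -l - m = -(l + m) by ring, show -l - (m + n) = -(l + m + n) by ring]
  simp only [mul_inv, inv_neg_pow]
  ring

end

/-- The triples `(y - 1, z - 1, x)` for which `x` lies to the right of `y + z`, between `y` and
`y + z`, between `0` and `y`, or to the left of `0`. They are parametrized by the gaps between
neighbouring points among `0`, `y`, `y + z`, `x`, each less `1`. -/
def chamber : Fin 4 → ℕ × ℕ × ℕ → (ℕ × ℕ) × ℤ :=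
  ![fun t => ((t.1, t.2.1), t.1 + 1 + (t.2.1 + 1) + (t.2.2 + 1)),
    fun t => ((t.1, t.2.1 + t.2.2 + 1), t.1 + 1 + (t.2.1 + 1)),
    fun t => ((t.1 + t.2.1 + 1, t.2.2), t.1 + 1),
    fun t => ((t.2.1, t.2.2), -(t.1 + 1))]

theorem chamber_injective : Injective fun p : Fin 4 × ℕ × ℕ × ℕ => chamber p.1 p.2 := by
  rintro ⟨i, l, m, n⟩ ⟨j, l', m', n'⟩ h
  fin_cases i <;> fin_cases j <;> simp [chamber] at h ⊢ <;> omega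

theorem exists_chamber_eq {M N : ℕ} {x : ℤ} (h0 : x ≠ 0) (hM : x ≠ M + 1)
    (hMN : x ≠ M + N + 2) : ∃ j t, chamber j t = ((M, N), x) := by
  rcases lt_or_gt_of_ne h0 with hx | hx
  · exact ⟨3, ((-x - 1).toNat, M, N), by
      simp only [chamber, Matrix.cons_val, Prod.mk.injEq, true_and]
      omega⟩
  rcases lt_or_gt_of_ne hM with hxM | hxM
  · exact ⟨2, ((x - 1).toNat, (M - x).toNat, N), by
      simp only [chamber, Matrix.cons_val, Prod.mk.injEq, and_true]
      omega⟩
  rcases lt_or_gt_of_ne hMN with hxMN | hxMN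
  · exact ⟨1, (M, (x - M - 2).toNat, (M + N + 1 - x).toNat), by
      simp only [chamber, Matrix.cons_val, Prod.mk.injEq, true_and]
      omega⟩
  · exact ⟨0, (M, N, (x - M - N - 3).toNat), by
      simp only [chamber, Matrix.cons_val, Prod.mk.injEq, true_and]
      omega⟩

theorem hasSum_planeTerm {a b p q r : ℕ} (c : ℕ) (ha : 2 ≤ a) (hb : 2 ≤ b) (hp : 2 ≤ p)
    (hq : 2 ≤ q) (hr : 2 ≤ r) :
    HasSum (fun k : (ℕ × ℕ) × ℤ => planeTerm a b c p q r (k.1.1 + 1) (k.1.2 + 1) k.2)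
      (zeta a b r c q p + (-1) ^ r * zeta a q r p b c + (-1) ^ (q + r) * zeta p q b a r c +
        (-1) ^ (p + q + r) * zeta p a b q c r) := by
  have hzero {M N : ℕ} {x : ℤ} (hne : planeTerm a b c p q r (M + 1) (N + 1) x ≠ 0) :
      ∃ j t, chamber j t = ((M, N), x) := by
    refine exists_chamber_eq ?_ ?_ ?_ <;> rintro rfl <;> refine hne ?_
    · simp [planeTerm, show p ≠ 0 by omega]
    · simp [planeTerm, show q ≠ 0 by omega]
    · simp [planeTerm, show r ≠ 0 by omega, show (M + N + 2 - (M + 1 + (N + 1)) : ℂ) = 0 by ring]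
  have h := hasSum_sum_of_injective chamber_injective
    (f := fun k : (ℕ × ℕ) × ℤ => planeTerm a b c p q r (k.1.1 + 1) (k.1.2 + 1) k.2)
    (s := ![zeta a b r c q p, (-1) ^ r * zeta a q r p b c, (-1) ^ (q + r) * zeta p q b a r c,
        (-1) ^ (p + q + r) * zeta p a b q c r]) (fun k hk => hzero hk) fun j => ?_
  · simpa only [Fin.sum_univ_four, Matrix.cons_val] using h
  fin_cases j
  · exact (hasSum_zeta c q p ha hb hr).congr_fun fun t => by
      simpa [chamber] using planeTerm_above a b c p q r (t.1 + 1) (t.2.1 + 1) (t.2.2 + 1)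
  · refine ((hasSum_zeta p b c ha hq hr).mul_left _).congr_fun fun t => ?_
    have h := planeTerm_upper a b c p q r (t.1 + 1) (t.2.1 + 1) (t.2.2 + 1)
    simpa [chamber, one_add_one_eq_two, add_assoc, add_comm, add_left_comm] using h
  · refine ((hasSum_zeta a r c hp hq hb).mul_left _).congr_fun fun t => ?_
    have h := planeTerm_lower a b c p q r (t.1 + 1) (t.2.1 + 1) (t.2.2 + 1)
    simpa [chamber, add_assoc, add_comm, add_left_comm] using h
  · exact ((hasSum_zeta q c r hp ha hb).mul_left _).congr_fun fun t => by
      simpa [chamber] using planeTerm_below a b c p q r (t.1 + 1) (t.2.1 + 1) (t.2.2 + 1)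

theorem hasSum_cubicSum_zeta {a b : ℕ} (c : ℕ) (ha : 2 ≤ a) (hb : 2 ≤ b) :
    HasSum (fun t : ℕ × ℕ => ((t.1 + 1 : ℂ) ^ a * (t.2 + 1) ^ b * (t.1 + 1 + (t.2 + 1)) ^ c)⁻¹ *
        cubicSum (t.1 + 1) (t.1 + 1 + (t.2 + 1)))
      (zeta a b 3 c 3 3 - zeta a 3 3 3 b c + zeta 3 3 b a 3 c - zeta 3 a b 3 c 3) := by
  have h := hasSum_planeTerm c ha hb (p := 3) (q := 3) (r := 3) (by norm_num) (by norm_num)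
    (by norm_num)
  have hfiber := h.prod_fiberwise fun t => (h.summable.prod_factor t).hasSum
  simp only [planeTerm, tsum_mul_left] at hfiber
  convert hfiber using 1
  · simp [cubicSum]
  · ring

theorem hasSum_cubicSum_two_three_three :
    HasSum (fun t : ℕ × ℕ => ((t.1 + 1 : ℂ) ^ 2 * (t.2 + 1) ^ 3 * (t.1 + 1 + (t.2 + 1)) ^ 3)⁻¹ *
        cubicSum (t.1 + 1) (t.1 + 1 + (t.2 + 1))) (zeta 2 3 3 3 3 3) := by
  convert hasSum_cubicSum_zeta 3 (le_refl 2) (show 2 ≤ 3 by norm_num) using 1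
  rw [← zeta_add_eq (a := 2) (b := 2) 2 3 3 le_rfl le_rfl (by norm_num)]
  ring

theorem hasSum_cubicSum_three_three_two :
    HasSum (fun t : ℕ × ℕ => ((t.1 + 1 : ℂ) ^ 3 * (t.2 + 1) ^ 3 * (t.1 + 1 + (t.2 + 1)) ^ 2)⁻¹ *
        cubicSum (t.1 + 1) (t.1 + 1 + (t.2 + 1))) 0 := by
  convert hasSum_cubicSum_zeta 2 (show 2 ≤ 3 by norm_num) (show 2 ≤ 3 by norm_num) using 1
  rw [zeta_reverse 3 3 3 2 3 3]
  ring

end RootZeta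

section Evaluation

theorem cubicSum_comm (y z : ℤ) : cubicSum y z = cubicSum z y :=
  tsum_congr fun x => by ring

theorem cubicSum_neg_left (y z : ℤ) : cubicSum (-y) z = cubicSum y (y + z) := by
  rw [cubicSum, ← (Equiv.subRight y).tsum_eq]
  refine tsum_congr fun x => ?_
  simp only [Equiv.subRight_apply, Int.cast_sub, Int.cast_neg, Int.cast_add]
  ring

theorem outerTerm_between (m n : ℤ) : outerTerm m (m + n) =
    -(((m : ℂ) ^ 2 * n ^ 3 * (m + n) ^ 3)⁻¹ * cubicSum m (m + n)) := by
  rw [outerTerm, Int.cast_add, sub_add_cancel_left]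
  simp only [mul_inv, inv_neg_pow]
  ring

theorem outerTerm_above (m n : ℤ) : outerTerm (m + n) m =
    ((m : ℂ) ^ 3 * n ^ 3 * (m + n) ^ 2)⁻¹ * cubicSum m (m + n) := by
  rw [outerTerm, Int.cast_add, add_sub_cancel_left, cubicSum_comm]
  ring

theorem outerTerm_below (m n : ℤ) : outerTerm (-m) n =
    -(((m : ℂ) ^ 2 * n ^ 3 * (m + n) ^ 3)⁻¹ * cubicSum m (m + n)) := by
  rw [outerTerm, Int.cast_neg, cubicSum_neg_left, show (-m - n : ℂ) = -(m + n) by ring]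
  simp only [mul_inv, inv_neg_pow]
  ring

/-- The pairs `(z - 1, y)`, `z ≥ 1`, for which `y` lies to the right of `z`, between `0` and `z`, or
to the left of `0`. They are parametrized by the gaps between neighbouring points among `0`, `z`,
`y`, each less `1`. -/
def region : Fin 3 → ℕ × ℕ → ℕ × ℤ :=
  ![fun t => (t.1, t.1 + 1 + (t.2 + 1)),
    fun t => (t.1 + t.2 + 1, t.1 + 1),
    fun t => (t.2, -(t.1 + 1))]

theorem region_injective : Injective fun p : Fin 3 × ℕ × ℕ => region p.1 p.2 := by
  rintro ⟨i, m, n⟩ ⟨j, m', n'⟩ h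
  fin_cases i <;> fin_cases j <;> simp [region] at h ⊢ <;> omega

theorem exists_region_eq {k : ℕ} {y : ℤ} (h0 : y ≠ 0) (hk : y ≠ k + 1) :
    ∃ j t, region j t = (k, y) := by
  rcases lt_or_gt_of_ne h0 with hy | hy
  · exact ⟨2, ((-y - 1).toNat, k), by
      simp only [region, Matrix.cons_val, Prod.mk.injEq, true_and]
      omega⟩
  rcases lt_or_gt_of_ne hk with hyk | hyk
  · exact ⟨1, ((y - 1).toNat, (k - y).toNat), by
      simp only [region, Matrix.cons_val, Prod.mk.injEq]
      omega⟩
  · exact ⟨0, (k, (y - k - 2).toNat), by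
      simp only [region, Matrix.cons_val, Prod.mk.injEq, true_and]
      omega⟩

theorem hasSum_outerTerm_zeta :
    HasSum (fun k : ℕ × ℤ => outerTerm k.2 (k.1 + 1)) (-2 * zeta 2 3 3 3 3 3) := by
  have hcover (k : ℕ × ℤ) (hk : outerTerm k.2 (k.1 + 1) ≠ 0) : ∃ j t, region j t = k := by
    refine exists_region_eq ?_ ?_ <;> intro h <;> exact hk (by simp [outerTerm, h])
  have h := hasSum_sum_of_injective region_injective
    (s := ![0, -zeta 2 3 3 3 3 3, -zeta 2 3 3 3 3 3]) hcover fun j => ?_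
  · convert h using 1
    simp only [Fin.sum_univ_three, Matrix.cons_val]
    ring
  fin_cases j
  · exact hasSum_cubicSum_three_three_two.congr_fun fun t => by
      simpa [region] using outerTerm_above (t.1 + 1) (t.2 + 1)
  · refine hasSum_cubicSum_two_three_three.neg.congr_fun fun t => ?_
    have h := outerTerm_between (t.1 + 1) (t.2 + 1)
    simpa [region, add_assoc, add_comm, add_left_comm] using h
  · exact hasSum_cubicSum_two_three_three.neg.congr_fun fun t => by
      simpa [region] using outerTerm_below (t.1 + 1) (t.2 + 1)

theorem neg_two_mul_zeta_233333 : -2 * zeta 2 3 3 3 3 3 =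
    -5882 * riemannZeta 17 + 2190 * intZeta 2 * riemannZeta 15 +
      (378 * intZeta 4 - 195 * intZeta 2 ^ 2) * riemannZeta 13 +
      (6 * intZeta 6 - 6 * intZeta 2 * intZeta 4) * riemannZeta 11 +
      (15 * intZeta 2 * intZeta 6 - 50 * intZeta 8) * riemannZeta 9 := by
  have hζ {k : ℕ} (hk : 2 ≤ k) (c : ℂ) :
      HasSum (fun n : ℕ => c * ((n + 1 : ℤ) : ℂ)⁻¹ ^ k) (c * riemannZeta k) := by
    simpa using (hasSum_nat_inv_pow hk).mul_left c
  have houter (n : ℕ) := hasSum_outerTerm (show (n + 1 : ℤ) ≠ 0 by omega)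
  refine (hasSum_outerTerm_zeta.prod_fiberwise houter).unique ?_
  exact ((((hζ (k := 17) (by norm_num) _).add (hζ (k := 15) (by norm_num) _)).add
    (hζ (k := 13) (by norm_num) _)).add (hζ (k := 11) (by norm_num) _)).add
    (hζ (k := 9) (by norm_num) _)

end Evaluation

end A3

/-- `ζ₃((2,3,3,3,3,3); A₃) = (π⁶/63) ζ(11) + (199π⁴/30) ζ(13) − 365π² ζ(15) + 2941 ζ(17)`
(Example 5.4 of Komori–Matsumoto–Tsumura). -/
theorem A3_value_233333 :
    (∑' t : ℕ × ℕ × ℕ,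
        (1 : ℂ) /
          (((t.1 + 1 : ℕ) : ℂ) ^ 2 * ((t.2.1 + 1 : ℕ) : ℂ) ^ 3 *
            ((t.2.2 + 1 : ℕ) : ℂ) ^ 3 * ((t.1 + 1 + (t.2.1 + 1) : ℕ) : ℂ) ^ 3 *
            ((t.2.1 + 1 + (t.2.2 + 1) : ℕ) : ℂ) ^ 3 *
            ((t.1 + 1 + (t.2.1 + 1) + (t.2.2 + 1) : ℕ) : ℂ) ^ 3)) =
      ((π : ℂ) ^ 6 / 63) * riemannZeta 11 + (199 * (π : ℂ) ^ 4 / 30) * riemannZeta 13 -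
        365 * (π : ℂ) ^ 2 * riemannZeta 15 + 2941 * riemannZeta 17 := by
  have hvalue := A3.neg_two_mul_zeta_233333
  rw [A3.intZeta_two, A3.intZeta_four, A3.intZeta_six, A3.intZeta_eight] at hvalue
  calc
    _ = A3.zeta 2 3 3 3 3 3 := tsum_congr fun t => by
      rw [one_div, A3.zetaTerm]
      push_cast
      rfl
    _ = _ := by linear_combination (-1 / 2) * hvalue
end
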